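/- arXiv:0808.3206 — 2 statements merged into one kernel-verified Lean document; each statement's English description precedes it below -/
import Mathlib

section
/- Let S be a simple arc whose endpoints lie on a simple closed curve P and whose interior lies in the interior of P. Then P \ {endpoints of S} consists of two arcs A₁, A₂, and the interior of P minus S consists of exactly two connected components T₁ and T₂, bounded by A₁ ∪ S and A₂ ∪ S respectively. -/
/-- A simple closed curve in the plane: the image of a continuous injection of the circle. -/
def IsSimpleClosedCurve (P : Set (ℝ × ℝ)) : Prop :=
  ∃ f : AddCircle (1 : ℝ) → ℝ × ℝ, Continuous f ∧ Function.Injective f ∧ Set.range f = P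

/-- The interior of a simple closed curve: points of the complement whose connected
component in the complement is bounded. -/
def JordanInterior (P : Set (ℝ × ℝ)) : Set (ℝ × ℝ) :=
  {y | y ∉ P ∧ Bornology.IsBounded (connectedComponentIn Pᶜ y)}

/-- The exterior of a simple closed curve: points of the complement whose connected
component in the complement is unbounded. -/
def JordanExterior (P : Set (ℝ × ℝ)) : Set (ℝ × ℝ) :=
  {y | y ∉ P ∧ ¬ Bornology.IsBounded (connectedComponentIn Pᶜ y)}

/-- A simple arc in the plane from `a` to `b` with image `γ`. -/
def IsArc (γ : Set (ℝ × ℝ)) (a b : ℝ × ℝ) : Prop :=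
  ∃ f : ℝ → ℝ × ℝ, ContinuousOn f (Set.Icc 0 1) ∧ Set.InjOn f (Set.Icc 0 1) ∧
    f 0 = a ∧ f 1 = b ∧ γ = f '' Set.Icc 0 1

namespace JArc

open Set Filter Topology

/-- The displacement `z - x` seen as a complex number. -/
noncomputable def dv (x z : ℝ × ℝ) : ℂ := ⟨z.1 - x.1, z.2 - x.2⟩

lemma dv_ne {x z : ℝ × ℝ} (h : z ≠ x) : dv x z ≠ 0 := by
  intro h0
  apply h
  have h1 := congrArg Complex.re h0
  have h2 := congrArg Complex.im h0
  simp only [dv, Complex.zero_re, Complex.zero_im] at h1 h2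
  ext <;> linarith

lemma continuous_dv2 : Continuous (fun w : (ℝ × ℝ) × (ℝ × ℝ) => dv w.1 w.2) := by
  have : (fun w : (ℝ × ℝ) × (ℝ × ℝ) => dv w.1 w.2) =
      fun w => Complex.equivRealProdCLM.symm (w.2 - w.1) := by
    funext w
    apply Complex.ext <;> simp [dv]
  rw [this]
  fun_prop

lemma continuous_dv (x : ℝ × ℝ) : Continuous (dv x) :=
  continuous_dv2.comp (by fun_prop : Continuous fun z : ℝ × ℝ => (x, z))

/-- A map from a contractible space to `ℂ \ {0}` has a continuous logarithm. -/
lemma exists_log {X : Type*} [TopologicalSpace X] [ContractibleSpace X]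
    [LocallyPathConnectedSpace X] (f : X → ℂ) (hf : Continuous f) (h0 : ∀ x, f x ≠ 0) :
    ∃ g : X → ℂ, Continuous g ∧ ∀ x, Complex.exp (g x) = f x := by
  obtain ⟨x₀⟩ : Nonempty X := inferInstance
  rcases Complex.isCoveringMapOn_exp.existsUnique_continuousMap_lifts
    ⟨f, hf⟩ (Complex.exp_log (h0 x₀)) (fun x => h0 x) with ⟨g, ⟨-, hg⟩, -⟩
  exact ⟨g, g.continuous, fun x => congrFun hg x⟩

lemma exp_const {X : Type*} [TopologicalSpace X] {s : Set X} (hs : IsPreconnected s)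
    {u : X → ℂ} (hu : ContinuousOn u s)
    (he : ∀ a ∈ s, ∀ b ∈ s, Complex.exp (u a) = Complex.exp (u b)) {a b : X}
    (ha : a ∈ s) (hb : b ∈ s) : u a = u b :=
  Complex.isCoveringMap_exp.constOn_of_comp hs hu
    (fun a ha b hb => Subtype.ext (he a ha b hb)) ha hb

/-- The key obstruction lemma. -/
lemma no_log {U : Set (ℝ × ℝ)} (hU : IsOpen U) (hUb : Bornology.IsBounded U) {a : ℝ × ℝ}
    (ha : a ∈ U) {n : ℤ} (hn : n ≠ 0) {G h : ℝ × ℝ → ℂ} (hG : ContinuousOn G (closure U))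
    (hG0 : ∀ z ∈ closure U, G z ≠ 0) (hh : ContinuousOn h (frontier U))
    (hE : ∀ z ∈ frontier U, dv a z ^ n * G z = Complex.exp (h z)) : False := by
  classical
  obtain ⟨H, hH⟩ := ContinuousMap.exists_restrict_eq (isClosed_frontier (s := U))
    (⟨(frontier U).domRestrict h, continuousOn_iff_continuous_domRestrict.mp hh⟩ :
      C(frontier U, ℂ))
  have hHe : ∀ z ∈ frontier U, H z = h z := fun z hz =>
    congrArg (fun f : C(frontier U, ℂ) => f ⟨z, hz⟩) hH
  set F : ℝ × ℝ → ℂ := (closure U).piecewise (fun z => Complex.exp (H z) / G z)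
    (fun z => dv a z ^ n) with hF
  have hne : ∀ z, z ∉ U → z ≠ a := fun z hz h => hz (h ▸ ha)
  have hFc : Continuous F := by
    apply continuous_piecewise
    · intro z hz
      have hz' : z ∈ frontier U := frontier_closure_subset hz
      rw [hHe z hz', ← hE z hz', mul_div_assoc, div_self (hG0 z hz'.1), mul_one]
    · rw [closure_closure]
      exact (Complex.continuous_exp.comp H.continuous).continuousOn.div hG hG0
    · have : closure (closure U)ᶜ ⊆ Uᶜ :=
        closure_minimal (compl_subset_compl.mpr subset_closure) hU.isClosed_compl
      exact (continuous_dv a).continuousOn.zpow₀ n fun z hz => Or.inl (dv_ne (hne z (this hz)))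
  have hF0 : ∀ z, F z ≠ 0 := by
    intro z
    by_cases hz : z ∈ closure U
    · rw [hF, piecewise_eq_of_mem _ _ _ hz]
      exact div_ne_zero (Complex.exp_ne_zero _) (hG0 z hz)
    · rw [hF, piecewise_eq_of_notMem _ _ _ hz]
      exact zpow_ne_zero _ (dv_ne (hne z fun h => hz (subset_closure h)))
  obtain ⟨L, hL, hLF⟩ := exists_log F hFc hF0
  obtain ⟨R, hR⟩ := (Metric.isBounded_iff_subset_closedBall a).mp hUb.closure
  have hRnn : 0 ≤ R := by
    have := hR (subset_closure ha)
    simpa using this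
  set r : ℝ := 2 * R + 1 with hr
  have hr0 : (r : ℂ) ≠ 0 := by
    have : r ≠ 0 := by positivity
    exact_mod_cast this
  let c : ℝ → ℝ × ℝ := fun θ => (a.1 + r * Real.cos θ, a.2 + r * Real.sin θ)
  have hc : Continuous c := by fun_prop
  have hout : ∀ θ, c θ ∉ closure U := by
    intro θ hθ
    have h1 := hR hθ
    rw [Metric.mem_closedBall, Prod.dist_eq] at h1
    have h2 := (max_le_iff.mp h1).1
    have h3 := (max_le_iff.mp h1).2
    simp only [c, Real.dist_eq, add_sub_cancel_left] at h2 h3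
    have h2' := sq_le_sq' (by linarith [neg_abs_le (r * Real.cos θ), abs_nonneg (r * Real.cos θ)]) h2
    have h3' := sq_le_sq' (by linarith [neg_abs_le (r * Real.sin θ), abs_nonneg (r * Real.sin θ)]) h3
    rw [sq_abs] at h2' h3'
    have := Real.sin_sq_add_cos_sq θ
    nlinarith
  have hdv : ∀ θ : ℝ, dv a (c θ) = r * Complex.exp (θ * Complex.I) := by
    intro θ
    rw [Complex.exp_mul_I]
    apply Complex.ext
    · simp [dv, c, Complex.cos_ofReal_re, Complex.sin_ofReal_im]
    · simp [dv, c, Complex.cos_ofReal_re, Complex.sin_ofReal_re]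
  have hLc : ∀ θ : ℝ, Complex.exp (L (c θ) - n * (θ * Complex.I)) = (r : ℂ) ^ n := by
    intro θ
    rw [Complex.exp_sub, hLF, hF, piecewise_eq_of_notMem _ _ _ (hout θ), hdv, mul_zpow,
      Complex.exp_int_mul, mul_div_assoc, div_self (zpow_ne_zero _ (Complex.exp_ne_zero _)), mul_one]
  have key := exp_const (s := (univ : Set ℝ)) isPreconnected_univ
    (u := fun θ : ℝ => L (c θ) - n * (θ * Complex.I)) (by fun_prop)
    (fun a _ b _ => by rw [hLc, hLc]) (mem_univ 0) (mem_univ (2 * Real.pi))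
  have hcc : c (2 * Real.pi) = c 0 := by simp [c]
  simp only [hcc] at key
  have : (n : ℂ) * ((2 * Real.pi : ℝ) * Complex.I) = 0 := by
    have h0 : ((0 : ℝ) : ℂ) = 0 := Complex.ofReal_zero
    rw [h0] at key
    linear_combination key
  simp [hn, Real.pi_ne_zero] at this

/-- `g` is a continuous logarithm of the displacement from `x` along `γ`. -/
def IsLg (γ : ℝ → ℝ × ℝ) (x : ℝ × ℝ) (g : ℝ → ℂ) : Prop :=
  ContinuousOn g (Icc 0 1) ∧ ∀ t ∈ Icc (0 : ℝ) 1, Complex.exp (g t) = dv x (γ t)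

lemma exists_isLg {γ : ℝ → ℝ × ℝ} (hγ : ContinuousOn γ (Icc 0 1)) {x : ℝ × ℝ}
    (hx : x ∉ γ '' Icc 0 1) : ∃ g, IsLg γ x g := by
  have hproj : ∀ t : ℝ, max 0 (min 1 t) ∈ Icc (0 : ℝ) 1 := fun t =>
    ⟨le_max_left _ _, max_le zero_le_one (min_le_left _ _)⟩
  obtain ⟨g, hg, he⟩ := exists_log (fun t : ℝ => dv x (γ (max 0 (min 1 t))))
    ((continuous_dv x).comp (hγ.comp_continuous (by fun_prop) hproj))
    (fun t => dv_ne fun h => hx ⟨_, hproj t, h⟩)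
  refine ⟨g, hg.continuousOn, fun t ht => ?_⟩
  rw [he, min_eq_right ht.2, max_eq_right ht.1]

open Classical in
/-- Increment of the logarithm of the displacement from `x` along `γ`. -/
noncomputable def inc (γ : ℝ → ℝ × ℝ) (x : ℝ × ℝ) : ℂ :=
  if h : ∃ g, IsLg γ x g then h.choose 1 - h.choose 0 else 0

lemma inc_eq {γ : ℝ → ℝ × ℝ} {x : ℝ × ℝ} {g : ℝ → ℂ} (hg : IsLg γ x g) :
    inc γ x = g 1 - g 0 := by
  have h : ∃ g, IsLg γ x g := ⟨g, hg⟩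
  rw [inc, dif_pos h]
  have hk := h.choose_spec
  set k := h.choose
  have hexp : ∀ t ∈ Icc (0 : ℝ) 1, Complex.exp (k t - g t) = 1 := fun t ht => by
    rw [Complex.exp_sub, hk.2 t ht, ← hg.2 t ht, div_self (Complex.exp_ne_zero _)]
  have := exp_const (isPreconnected_Icc (a := (0 : ℝ)) (b := 1)) (hk.1.sub hg.1)
    (fun a ha b hb => (hexp a ha).trans (hexp b hb).symm) (left_mem_Icc.mpr zero_le_one)
    (right_mem_Icc.mpr zero_le_one)
  simp only [Pi.sub_apply] at this
  linear_combination -this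

/-- Winding number (times `2 π i`) of the closed curve made of `α` and the reverse of `β`. -/
noncomputable def wn (α β : ℝ → ℝ × ℝ) (x : ℝ × ℝ) : ℂ := inc α x - inc β x

/-- Image of the union of two arcs. -/
def cv (α β : ℝ → ℝ × ℝ) : Set (ℝ × ℝ) := α '' Icc 0 1 ∪ β '' Icc 0 1

/-- Two arcs with the same endpoints, otherwise disjoint. -/
structure LP (α β : ℝ → ℝ × ℝ) : Prop where
  ca : ContinuousOn α (Icc 0 1)
  cb : ContinuousOn β (Icc 0 1)
  ia : InjOn α (Icc 0 1)
  ib : InjOn β (Icc 0 1)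
  h0 : α 0 = β 0
  h1 : α 1 = β 1
  hd : ∀ s ∈ Icc (0 : ℝ) 1, ∀ t ∈ Icc (0 : ℝ) 1, α s = β t → (s = 0 ∧ t = 0) ∨ (s = 1 ∧ t = 1)

lemma cv_comm (α β : ℝ → ℝ × ℝ) : cv α β = cv β α := union_comm _ _

namespace LP

variable {α β : ℝ → ℝ × ℝ}

lemma symm (h : LP α β) : LP β α :=
  ⟨h.cb, h.ca, h.ib, h.ia, h.h0.symm, h.h1.symm, fun s hs t ht e => by
    rcases h.hd t ht s hs e.symm with h | h
    · exact Or.inl h.symm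
    · exact Or.inr h.symm⟩

lemma compact (h : LP α β) : IsCompact (cv α β) :=
  (isCompact_Icc.image_of_continuousOn h.ca).union (isCompact_Icc.image_of_continuousOn h.cb)

lemma closed (h : LP α β) : IsClosed (cv α β) := h.compact.isClosed

lemma lga (h : LP α β) {x : ℝ × ℝ} (hx : x ∉ cv α β) : ∃ g, IsLg α x g :=
  exists_isLg h.ca fun h => hx (Or.inl h)

lemma lgb (h : LP α β) {x : ℝ × ℝ} (hx : x ∉ cv α β) : ∃ g, IsLg β x g :=
  exists_isLg h.cb fun h => hx (Or.inr h)

end LP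

lemma zero_mem : (0 : ℝ) ∈ Icc (0 : ℝ) 1 := left_mem_Icc.mpr zero_le_one
lemma one_mem : (1 : ℝ) ∈ Icc (0 : ℝ) 1 := right_mem_Icc.mpr zero_le_one

namespace LP

variable {α β : ℝ → ℝ × ℝ}

lemma wn_eq_of_log (h : LP α β) {x y : ℝ × ℝ} (hx : x ∉ cv α β) {k : ℝ × ℝ → ℂ}
    (hk : ContinuousOn k (cv α β)) (he : ∀ z ∈ cv α β, dv y z = dv x z * Complex.exp (k z)) :
    wn α β y = wn α β x := by
  obtain ⟨ga, hga⟩ := h.lga hx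
  obtain ⟨gb, hgb⟩ := h.lgb hx
  have ha : IsLg α y (fun t => ga t + k (α t)) := by
    refine ⟨hga.1.add (hk.comp h.ca fun t ht => Or.inl ⟨t, ht, rfl⟩), fun t ht => ?_⟩
    rw [Complex.exp_add, hga.2 t ht, he _ (Or.inl ⟨t, ht, rfl⟩)]
  have hb : IsLg β y (fun t => gb t + k (β t)) := by
    refine ⟨hgb.1.add (hk.comp h.cb fun t ht => Or.inr ⟨t, ht, rfl⟩), fun t ht => ?_⟩
    rw [Complex.exp_add, hgb.2 t ht, he _ (Or.inr ⟨t, ht, rfl⟩)]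
  rw [wn, wn, inc_eq ha, inc_eq hb, inc_eq hga, inc_eq hgb, h.h0, h.h1]
  ring

lemma wn_eventually (h : LP α β) {x : ℝ × ℝ} (hx : x ∉ cv α β) :
    ∀ᶠ y in 𝓝 x, wn α β y = wn α β x := by
  have hne : ∀ z ∈ cv α β, dv x z ≠ 0 := fun z hz => dv_ne fun e => hx (e ▸ hz)
  have := h.compact.eventually_forall_of_forall_eventually (x₀ := x)
    (P := fun y z => dv y z / dv x z ∈ Complex.slitPlane) (by
      intro z hz
      have hc : ContinuousAt (fun w : (ℝ × ℝ) × (ℝ × ℝ) => dv w.1 w.2 / dv x w.2) (x, z) :=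
        continuous_dv2.continuousAt.div
          ((continuous_dv x).comp continuous_snd).continuousAt (hne z hz)
      apply hc.eventually_mem
      apply Complex.isOpen_slitPlane.mem_nhds
      simp only [div_self (hne z hz)]
      exact Complex.one_mem_slitPlane)
  filter_upwards [this] with y hy
  refine h.wn_eq_of_log hx (k := fun z => Complex.log (dv y z / dv x z)) ?_ ?_
  · exact ((continuous_dv y).continuousOn.div (continuous_dv x).continuousOn hne).clog hy
  · intro z hz
    rw [Complex.exp_log (Complex.slitPlane_ne_zero (hy z hz)), mul_div_cancel₀ _ (hne z hz)]

lemma wn_const (h : LP α β) {s : Set (ℝ × ℝ)} (hs : IsPreconnected s)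
    (hd : ∀ x ∈ s, x ∉ cv α β) {x y : ℝ × ℝ} (hx : x ∈ s) (hy : y ∈ s) :
    wn α β x = wn α β y := by
  refine hs.induction₂ (fun x y => wn α β x = wn α β y) ?_ ?_ ?_ hx hy
  · intro x hx
    filter_upwards [nhdsWithin_le_nhds (h.wn_eventually (hd x hx))] with y hy using hy.symm
  · intro x y z _ _ _ h1 h2
    exact h1.trans h2
  · intro x y _ _ h1
    exact h1.symm

lemma wn_far (h : LP α β) {x : ℝ × ℝ} (hx : α 0 ≠ x)
    (hf : ∀ z ∈ cv α β, ‖dv (α 0) z‖ < ‖dv x (α 0)‖) : wn α β x = 0 := by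
  have h0 := dv_ne hx
  have hsl : ∀ z ∈ cv α β, dv x z / dv x (α 0) ∈ Complex.slitPlane := by
    intro z hz
    have q : 1 + dv (α 0) z / dv x (α 0) ∈ Complex.slitPlane := by
      apply Complex.mem_slitPlane_of_norm_lt_one
      rw [norm_div, div_lt_one (norm_pos_iff.mpr h0)]
      exact hf z hz
    have e : dv x z / dv x (α 0) = 1 + dv (α 0) z / dv x (α 0) := by
      rw [eq_comm, ← sub_eq_zero]
      field_simp
      apply Complex.ext <;> simp [dv]
    rw [e]
    exact q
  have hk : ContinuousOn (fun z => Complex.log (dv x z / dv x (α 0))) (cv α β) :=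
    ((continuous_dv x).continuousOn.div continuousOn_const fun _ _ => h0).clog hsl
  have hg : ∀ z ∈ cv α β,
      Complex.exp (Complex.log (dv x z / dv x (α 0)) + Complex.log (dv x (α 0))) = dv x z := by
    intro z hz
    rw [Complex.exp_add, Complex.exp_log (Complex.slitPlane_ne_zero (hsl z hz)),
      Complex.exp_log h0, div_mul_cancel₀ _ h0]
  have ha : IsLg α x (fun t => Complex.log (dv x (α t) / dv x (α 0)) + Complex.log (dv x (α 0))) :=
    ⟨(hk.comp h.ca fun t ht => Or.inl ⟨t, ht, rfl⟩).add continuousOn_const,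
      fun t ht => hg _ (Or.inl ⟨t, ht, rfl⟩)⟩
  have hb : IsLg β x (fun t => Complex.log (dv x (β t) / dv x (α 0)) + Complex.log (dv x (α 0))) :=
    ⟨(hk.comp h.cb fun t ht => Or.inr ⟨t, ht, rfl⟩).add continuousOn_const,
      fun t ht => hg _ (Or.inr ⟨t, ht, rfl⟩)⟩
  rw [wn, inc_eq ha, inc_eq hb, h.h1, h.h0]
  ring

/-- The winding number vanishes on unbounded connected sets off the curve. -/
lemma wn_unbounded (h : LP α β) {s : Set (ℝ × ℝ)} (hs : IsPreconnected s)
    (hd : ∀ x ∈ s, x ∉ cv α β) (hb : ¬ Bornology.IsBounded s) {x : ℝ × ℝ} (hx : x ∈ s) :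
    wn α β x = 0 := by
  obtain ⟨R, hR⟩ := h.compact.exists_bound_of_continuousOn (continuous_dv (α 0)).continuousOn
  obtain ⟨y, hy, hyR⟩ : ∃ y ∈ s, R < ‖dv y (α 0)‖ := by
    by_contra! hcon
    apply hb
    rw [Metric.isBounded_iff_subset_closedBall (α 0)]
    refine ⟨R, fun y hy => ?_⟩
    have h1 := (Complex.abs_re_le_norm _).trans (hcon y hy)
    have h2 := (Complex.abs_im_le_norm _).trans (hcon y hy)
    rw [Metric.mem_closedBall, dist_comm, Prod.dist_eq, Real.dist_eq, Real.dist_eq]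
    exact max_le h1 h2
  rw [h.wn_const hs hd hx hy]
  refine h.wn_far (fun e => hd y hy (e ▸ Or.inl ⟨0, zero_mem, rfl⟩)) fun z hz => ?_
  exact (hR z hz).trans_lt hyR

lemma wn_int (h : LP α β) {x : ℝ × ℝ} (hx : x ∉ cv α β) :
    ∃ n : ℤ, wn α β x = n * (2 * Real.pi * Complex.I) := by
  obtain ⟨ga, hga⟩ := h.lga hx
  obtain ⟨gb, hgb⟩ := h.lgb hx
  rw [wn, inc_eq hga, inc_eq hgb]
  apply Complex.exp_eq_one_iff.mp
  rw [Complex.exp_sub, Complex.exp_sub, Complex.exp_sub, hga.2 _ one_mem, hga.2 _ zero_mem,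
    hgb.2 _ one_mem, hgb.2 _ zero_mem, h.h0, h.h1]
  apply div_self
  rw [← hgb.2 _ one_mem, ← hgb.2 _ zero_mem]
  exact div_ne_zero (Complex.exp_ne_zero _) (Complex.exp_ne_zero _)

end LP

lemma continuousOn_inv {γ : ℝ → ℝ × ℝ} {T : Set ℝ} (hT : IsCompact T) (hγ : ContinuousOn γ T)
    (hi : InjOn γ T) : ContinuousOn (Function.invFunOn γ T) (γ '' T) := by
  rw [continuousOn_iff_isClosed]
  intro t ht
  refine ⟨γ '' (T ∩ t), ((hT.inter_right ht).image_of_continuousOn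
    (hγ.mono inter_subset_left)).isClosed, ?_⟩
  ext z
  constructor
  · rintro ⟨hz, s, hs, rfl⟩
    rw [mem_preimage, hi.leftInvOn_invFunOn hs] at hz
    exact ⟨⟨s, ⟨hs, hz⟩, rfl⟩, ⟨s, hs, rfl⟩⟩
  · rintro ⟨⟨s, ⟨hs, hst⟩, rfl⟩, hz⟩
    refine ⟨?_, hz⟩
    rw [mem_preimage, hi.leftInvOn_invFunOn hs]
    exact hst

/-- Gluing of logarithms along two arcs. -/
lemma LP.glue {α β : ℝ → ℝ × ℝ} (h : LP α β) {T : Set ℝ} (hT : IsClosed T) (hTI : T ⊆ Icc 0 1)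
    (hT0 : 0 ∈ T) {F : ℝ × ℝ → ℂ} {ga gb : ℝ → ℂ} (hga : ContinuousOn ga T)
    (hgb : ContinuousOn gb (Icc 0 1)) (hFa : ∀ t ∈ T, F (α t) = Complex.exp (ga t))
    (hFb : ∀ t ∈ Icc (0 : ℝ) 1, F (β t) = Complex.exp (gb t))
    (hinc : ga 1 - ga 0 = gb 1 - gb 0) :
    ∃ k : ℝ × ℝ → ℂ, ContinuousOn k (α '' T ∪ β '' Icc 0 1) ∧
      ∀ z ∈ α '' T ∪ β '' Icc 0 1, F z = Complex.exp (k z) := by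
  classical
  have hTc : IsCompact T := isCompact_Icc.of_isClosed_subset hT hTI
  have hia : InjOn α T := h.ia.mono hTI
  have hca : ContinuousOn α T := h.ca.mono hTI
  set ua := fun z => ga (Function.invFunOn α T z) with hua
  set ub := fun z => gb (Function.invFunOn β (Icc 0 1) z) + (ga 0 - gb 0) with hub
  have eua : ∀ t ∈ T, ua (α t) = ga t := fun t ht => by
    simp only [hua]; rw [hia.leftInvOn_invFunOn ht]
  have eub : ∀ t ∈ Icc (0 : ℝ) 1, ub (β t) = gb t + (ga 0 - gb 0) := fun t ht => by
    simp only [hub]; rw [h.ib.leftInvOn_invFunOn ht]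
  have cua : ContinuousOn ua (α '' T) := hga.comp (continuousOn_inv hTc hca hia)
    (by rintro _ ⟨t, ht, rfl⟩; rwa [hia.leftInvOn_invFunOn ht])
  have cub : ContinuousOn ub (β '' Icc 0 1) :=
    (hgb.comp (continuousOn_inv isCompact_Icc h.cb h.ib)
    (by rintro _ ⟨t, ht, rfl⟩; rwa [h.ib.leftInvOn_invFunOn ht])).add continuousOn_const
  set k := fun z => if z ∈ α '' T then ua z else ub z with hk
  have ka : ∀ z ∈ α '' T, k z = ua z := fun z hz => if_pos hz
  have kb : ∀ z ∈ β '' Icc 0 1, k z = ub z := by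
    intro z hz
    by_cases hza : z ∈ α '' T
    · rw [ka z hza]
      obtain ⟨t, ht, rfl⟩ := hz
      obtain ⟨s, hs, hst⟩ := hza
      rw [eub t ht, ← hst, eua s hs]
      rcases h.hd s (hTI hs) t ht hst with ⟨rfl, rfl⟩ | ⟨rfl, rfl⟩
      · ring
      · linear_combination hinc
    · exact if_neg hza
  refine ⟨k, (cua.congr ka).union_of_isClosed (cub.congr kb)
    (hTc.image_of_continuousOn hca).isClosed
    (isCompact_Icc.image_of_continuousOn h.cb).isClosed, ?_⟩
  rintro z (hz | hz)
  · rw [ka z hz]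
    obtain ⟨t, ht, rfl⟩ := hz
    rw [eua t ht, hFa t ht]
  · rw [kb z hz]
    obtain ⟨t, ht, rfl⟩ := hz
    have e0 : Complex.exp (ga 0) = Complex.exp (gb 0) := by
      rw [← hFa 0 hT0, ← hFb 0 zero_mem, h.h0]
    rw [eub t ht, hFb t ht, Complex.exp_add, Complex.exp_sub, e0,
      div_self (Complex.exp_ne_zero _), mul_one]

lemma frontier_comp {C : Set (ℝ × ℝ)} (hC : IsClosed C) (x : ℝ × ℝ) :
    frontier (connectedComponentIn Cᶜ x) ⊆ C := by
  intro z hz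
  by_contra hzC
  have hV : IsOpen (connectedComponentIn Cᶜ z) := hC.isOpen_compl.connectedComponentIn
  have hU : IsOpen (connectedComponentIn Cᶜ x) := hC.isOpen_compl.connectedComponentIn
  obtain ⟨w, hwV, hwU⟩ := mem_closure_iff.mp hz.1 _ hV (mem_connectedComponentIn hzC)
  have e : connectedComponentIn Cᶜ x = connectedComponentIn Cᶜ z := by
    rw [connectedComponentIn_eq hwV, connectedComponentIn_eq hwU]
  rw [hU.frontier_eq] at hz
  exact hz.2 (e ▸ mem_connectedComponentIn hzC)

lemma isOpen_interior {C : Set (ℝ × ℝ)} (hC : IsClosed C) : IsOpen (JordanInterior C) := by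
  rw [isOpen_iff_mem_nhds]
  rintro x ⟨hx, hb⟩
  filter_upwards [(hC.isOpen_compl.connectedComponentIn (x := x)).mem_nhds
    (mem_connectedComponentIn hx)] with y hy
  exact ⟨connectedComponentIn_subset _ _ hy, connectedComponentIn_eq hy ▸ hb⟩

namespace LP

variable {α β : ℝ → ℝ × ℝ}

lemma wn_ne_zero (h : LP α β) {x : ℝ × ℝ} (hx : x ∈ JordanInterior (cv α β)) :
    wn α β x ≠ 0 := by
  intro hw
  obtain ⟨ga, hga⟩ := h.lga hx.1
  obtain ⟨gb, hgb⟩ := h.lgb hx.1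
  rw [wn, inc_eq hga, inc_eq hgb, sub_eq_zero] at hw
  obtain ⟨k, hk, he⟩ := h.glue isClosed_Icc subset_rfl zero_mem (F := dv x) hga.1 hgb.1
    (fun t ht => (hga.2 t ht).symm) (fun t ht => (hgb.2 t ht).symm) hw
  have hf := frontier_comp h.closed x
  refine no_log (h.closed.isOpen_compl.connectedComponentIn) hx.2
    (mem_connectedComponentIn hx.1) one_ne_zero (G := fun _ => 1) (h := k) continuousOn_const
    (fun _ _ => one_ne_zero) (hk.mono hf) fun z hz => ?_
  rw [zpow_one, mul_one]
  exact he z (hf hz)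

lemma wn_eq_zero (h : LP α β) {x : ℝ × ℝ} (hx : x ∉ cv α β)
    (hx' : x ∉ JordanInterior (cv α β)) : wn α β x = 0 := by
  refine h.wn_unbounded (s := connectedComponentIn (cv α β)ᶜ x) isPreconnected_connectedComponentIn
    (fun y hy => connectedComponentIn_subset _ _ hy) (fun hb => hx' ⟨hx, hb⟩)
    (mem_connectedComponentIn hx)

/-- The bounded components coincide. -/
lemma same_comp (h : LP α β) {x y : ℝ × ℝ} (hx : x ∈ JordanInterior (cv α β))
    (hy : y ∈ JordanInterior (cv α β)) : y ∈ connectedComponentIn (cv α β)ᶜ x := by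
  by_contra hn
  set U := connectedComponentIn (cv α β)ᶜ x with hU
  have hUo : IsOpen U := h.closed.isOpen_compl.connectedComponentIn
  have hf : frontier U ⊆ cv α β := frontier_comp h.closed x
  have hyU : y ∉ closure U := by
    intro hyc
    apply hy.1
    apply hf
    rw [hUo.frontier_eq]
    exact ⟨hyc, hn⟩
  obtain ⟨ga, hga⟩ := h.lga hx.1
  obtain ⟨gb, hgb⟩ := h.lgb hx.1
  obtain ⟨ka, hka⟩ := h.lga hy.1
  obtain ⟨kb, hkb⟩ := h.lgb hy.1
  obtain ⟨n, hn⟩ := h.wn_int hx.1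
  obtain ⟨m, hm⟩ := h.wn_int hy.1
  have hm0 : m ≠ 0 := by
    rintro rfl
    exact h.wn_ne_zero hy (by simpa using hm)
  rw [wn, inc_eq hga, inc_eq hgb] at hn
  rw [wn, inc_eq hka, inc_eq hkb] at hm
  obtain ⟨k, hk, he⟩ := h.glue isClosed_Icc subset_rfl zero_mem
    (F := fun z => dv x z ^ m * dv y z ^ (-n))
    (ga := fun t => m * ga t + (-n : ℤ) * ka t) (gb := fun t => m * gb t + (-n : ℤ) * kb t)
    ((continuousOn_const.mul hga.1).add (continuousOn_const.mul hka.1))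
    ((continuousOn_const.mul hgb.1).add (continuousOn_const.mul hkb.1))
    (fun t ht => by
      rw [Complex.exp_add, Complex.exp_int_mul, Complex.exp_int_mul, hga.2 t ht, hka.2 t ht])
    (fun t ht => by
      rw [Complex.exp_add, Complex.exp_int_mul, Complex.exp_int_mul, hgb.2 t ht, hkb.2 t ht])
    (by push_cast; linear_combination (m : ℂ) * hn - (n : ℂ) * hm)
  have hne : ∀ z ∈ closure U, dv y z ≠ 0 := fun z hz => dv_ne fun e => hyU (e ▸ hz)
  exact no_log hUo hx.2 (mem_connectedComponentIn hx.1) hm0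
    (G := fun z => dv y z ^ (-n)) (h := k)
    ((continuous_dv y).continuousOn.zpow₀ _ fun z hz => Or.inl (hne z hz))
    (fun z hz => zpow_ne_zero _ (hne z hz)) (hk.mono hf) fun z hz => he z (hf hz)

lemma interior_eq (h : LP α β) {x : ℝ × ℝ} (hx : x ∈ JordanInterior (cv α β)) :
    JordanInterior (cv α β) = connectedComponentIn (cv α β)ᶜ x := by
  ext y
  refine ⟨fun hy => h.same_comp hx hy, fun hy => ⟨connectedComponentIn_subset _ _ hy, ?_⟩⟩
  rw [← connectedComponentIn_eq hy]
  exact hx.2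

/-- A bounded open set whose frontier lies in the curve has every inner point of `α` in its
frontier. -/
lemma mem_frontier (h : LP α β) {V : Set (ℝ × ℝ)} (hV : IsOpen V) (hb : Bornology.IsBounded V)
    {a : ℝ × ℝ} (ha : a ∈ V) (haC : a ∉ cv α β) (hf : frontier V ⊆ cv α β) {t : ℝ}
    (ht : t ∈ Ioo (0 : ℝ) 1) : α t ∈ frontier V := by
  classical
  by_contra hc
  have hat : ContinuousAt α t := h.ca.continuousAt (Icc_mem_nhds ht.1 ht.2)
  have hev : ∀ᶠ s in 𝓝 t, α s ∉ frontier V ∧ s ∈ Ioo (0 : ℝ) 1 :=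
    (hat.eventually_mem (isClosed_frontier.isOpen_compl.mem_nhds hc)).and
      (isOpen_Ioo.mem_nhds ht)
  obtain ⟨l, u, ⟨hlt, htu⟩, hlu⟩ := mem_nhds_iff_exists_Ioo_subset.mp hev
  have hl : 0 ≤ l := by
    by_contra hl
    push Not at hl
    exact lt_irrefl _ (hlu (show (0 : ℝ) ∈ Ioo l u from ⟨hl, ht.1.trans htu⟩)).2.1
  have hu : u ≤ 1 := by
    by_contra hu
    push Not at hu
    exact lt_irrefl _ (hlu (show (1 : ℝ) ∈ Ioo l u from ⟨hlt.trans ht.2, hu⟩)).2.2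
  obtain ⟨ga, hga⟩ := h.lga haC
  obtain ⟨gb, hgb⟩ := h.lgb haC
  set d : ℂ := wn α β a with hd
  have hd' : d = (ga 1 - ga 0) - (gb 1 - gb 0) := by rw [hd, wn, inc_eq hga, inc_eq hgb]
  have hdexp : Complex.exp d = 1 := Complex.exp_eq_one_iff.mpr (h.wn_int haC)
  set g' : ℝ → ℂ := fun s => if s ≤ l then ga s else ga s - d with hg'
  have c1 : ContinuousOn g' (Icc 0 l) :=
    (hga.1.mono (Icc_subset_Icc_right (by linarith))).congr fun s hs => if_pos hs.2
  have c2 : ContinuousOn g' (Icc u 1) :=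
    ((hga.1.mono (Icc_subset_Icc_left (by linarith))).sub continuousOn_const).congr
      fun s hs => if_neg (by linarith [hs.1] : ¬ s ≤ l)
  have hTI : Icc 0 l ∪ Icc u 1 ⊆ Icc (0 : ℝ) 1 :=
    union_subset (Icc_subset_Icc_right (by linarith)) (Icc_subset_Icc_left (by linarith))
  obtain ⟨k, hk, he⟩ := h.glue (T := Icc 0 l ∪ Icc u 1) (isClosed_Icc.union isClosed_Icc)
    hTI (Or.inl (left_mem_Icc.mpr hl))
    (F := dv a) (ga := g') (gb := gb) (c1.union_of_isClosed c2 isClosed_Icc isClosed_Icc) hgb.1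
    (fun s hs => by
      simp only [hg']
      split_ifs
      · exact (hga.2 s (hTI hs)).symm
      · rw [Complex.exp_sub, hdexp, div_one]; exact (hga.2 s (hTI hs)).symm)
    (fun t ht => (hgb.2 t ht).symm)
    (by
      have e1 : g' 1 = ga 1 - d := if_neg (by linarith)
      have e0 : g' 0 = ga 0 := if_pos hl
      rw [e1, e0, hd']; ring)
  have hsub : frontier V ⊆ α '' (Icc 0 l ∪ Icc u 1) ∪ β '' Icc 0 1 := by
    intro z hz
    rcases hf hz with ⟨s, hs, rfl⟩ | hz'
    · left
      refine ⟨s, ?_, rfl⟩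
      by_contra hsn
      rw [mem_union, not_or] at hsn
      have h1 : l < s := by
        by_contra hh; exact hsn.1 ⟨hs.1, not_lt.mp hh⟩
      have h2 : s < u := by
        by_contra hh; exact hsn.2 ⟨not_lt.mp hh, hs.2⟩
      exact (hlu (show s ∈ Ioo l u from ⟨h1, h2⟩)).1 hz
    · exact Or.inr hz'
  refine no_log hV hb ha one_ne_zero (G := fun _ => 1) (h := k) continuousOn_const
    (fun _ _ => one_ne_zero) (hk.mono hsub) fun z hz => ?_
  rw [zpow_one, mul_one]
  exact he z (hsub hz)

end LP

lemma interior_bounded {α β : ℝ → ℝ × ℝ} (h : LP α β) :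
    Bornology.IsBounded (JordanInterior (cv α β)) := by
  rcases (JordanInterior (cv α β)).eq_empty_or_nonempty with h0 | ⟨x, hx⟩
  · rw [h0]; exact Bornology.isBounded_empty
  · rw [h.interior_eq hx]; exact hx.2

namespace LP

variable {α β : ℝ → ℝ × ℝ}

lemma frontier_interior_subset (h : LP α β) : frontier (JordanInterior (cv α β)) ⊆ cv α β := by
  rcases (JordanInterior (cv α β)).eq_empty_or_nonempty with h0 | ⟨x, hx⟩
  · rw [h0]; simp
  · rw [h.interior_eq hx]; exact frontier_comp h.closed x

lemma mem_frontier_interior (h : LP α β) (hne : (JordanInterior (cv α β)).Nonempty) {t : ℝ}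
    (ht : t ∈ Ioo (0 : ℝ) 1) : α t ∈ frontier (JordanInterior (cv α β)) := by
  obtain ⟨a, ha⟩ := hne
  exact h.mem_frontier (isOpen_interior h.closed) (interior_bounded h) ha ha.1
    h.frontier_interior_subset ht

lemma mem_closure_ext (h : LP α β) (hne : (JordanInterior (cv α β)).Nonempty) {t : ℝ}
    (ht : t ∈ Ioo (0 : ℝ) 1) : α t ∈ closure {y | y ∉ cv α β ∧ y ∉ JordanInterior (cv α β)} := by
  by_contra hc
  rw [Metric.mem_closure_iff] at hc
  push Not at hc
  obtain ⟨ε, hε, hc⟩ := hc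
  obtain ⟨a, ha⟩ := hne
  set V := JordanInterior (cv α β) ∪ Metric.ball (α t) (ε / 2) with hV
  have hVo : IsOpen V := (isOpen_interior h.closed).union Metric.isOpen_ball
  have hVb : Bornology.IsBounded V := (interior_bounded h).union Metric.isBounded_ball
  have hf : frontier V ⊆ cv α β := by
    intro z hz
    rw [hVo.frontier_eq] at hz
    obtain ⟨hz1, hz2⟩ := hz
    rw [hV, mem_union, not_or] at hz2
    rw [hV, closure_union] at hz1
    by_contra hzC
    rcases hz1 with hz1 | hz1
    · apply hzC
      apply h.frontier_interior_subset
      rw [(isOpen_interior h.closed).frontier_eq]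
      exact ⟨hz1, hz2.1⟩
    · have h1 := Metric.closure_ball_subset_closedBall hz1
      rw [Metric.mem_closedBall, dist_comm] at h1
      have h2 := hc z ⟨hzC, hz2.1⟩
      linarith
  have := h.mem_frontier hVo hVb (Or.inl ha) ha.1 hf ht
  rw [hVo.frontier_eq] at this
  exact this.2 (Or.inr (Metric.mem_ball_self (by positivity)))

lemma endpoint_mem_closure {γ : ℝ → ℝ × ℝ} (hγ : ContinuousOn γ (Icc 0 1)) :
    γ '' Icc 0 1 ⊆ closure (γ '' Ioo 0 1) := by
  rw [← closure_Ioo (zero_ne_one (α := ℝ))] at hγ ⊢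
  exact hγ.image_closure

lemma frontier_interior (h : LP α β) (hne : (JordanInterior (cv α β)).Nonempty) :
    frontier (JordanInterior (cv α β)) = cv α β := by
  apply h.frontier_interior_subset.antisymm
  apply union_subset
  · refine (endpoint_mem_closure h.ca).trans (closure_minimal ?_ isClosed_frontier)
    rintro _ ⟨t, ht, rfl⟩
    exact h.mem_frontier_interior hne ht
  · refine (endpoint_mem_closure h.cb).trans (closure_minimal ?_ isClosed_frontier)
    rintro _ ⟨t, ht, rfl⟩
    rw [cv_comm] at hne ⊢
    exact h.symm.mem_frontier_interior hne ht

lemma isConnected_interior (h : LP α β) (hne : (JordanInterior (cv α β)).Nonempty) :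
    IsConnected (JordanInterior (cv α β)) := by
  refine ⟨hne, ?_⟩
  obtain ⟨x, hx⟩ := hne
  rw [h.interior_eq hx]
  exact isPreconnected_connectedComponentIn

/-- Inner points of the first arc are not on the second one. -/
lemma not_mem (h : LP α β) {t : ℝ} (ht : t ∈ Ioo (0 : ℝ) 1) : α t ∉ β '' Icc 0 1 := by
  rintro ⟨s, hs, e⟩
  rcases h.hd t (Ioo_subset_Icc_self ht) s hs e.symm with h | h
  · exact ht.1.ne' h.1
  · exact ht.2.ne h.1

end LP

section Theta

variable {α β σ : ℝ → ℝ × ℝ}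

lemma sigma_subset (h2 : LP α σ) (hσ : ∀ t ∈ Ioo (0 : ℝ) 1, σ t ∈ JordanInterior (cv α β)) {z}
    (hz : z ∈ σ '' Icc 0 1) : z ∈ cv α β ∨ z ∈ JordanInterior (cv α β) := by
  obtain ⟨t, ht, rfl⟩ := hz
  rcases ht.1.eq_or_lt with rfl | h0
  · left; left; exact ⟨0, zero_mem, h2.h0⟩
  rcases ht.2.eq_or_lt with rfl | h1
  · left; left; exact ⟨1, one_mem, h2.h1⟩
  exact Or.inr (hσ t ⟨h0, h1⟩)

/-- The winding number around `α ∪ σ` vanishes outside `α ∪ β`. -/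
lemma wn_ext (h1 : LP α β) (h2 : LP α σ)
    (hσ : ∀ t ∈ Ioo (0 : ℝ) 1, σ t ∈ JordanInterior (cv α β)) {x : ℝ × ℝ}
    (hx : x ∉ cv α β) (hx' : x ∉ JordanInterior (cv α β)) : x ∉ cv α σ ∧ wn α σ x = 0 := by
  have hd : ∀ y ∈ connectedComponentIn (cv α β)ᶜ x, y ∉ cv α σ := by
    intro y hy
    have hyC : y ∉ cv α β := connectedComponentIn_subset _ _ hy
    rintro (hya | hys)
    · exact hyC (Or.inl hya)
    · rcases sigma_subset h2 hσ hys with h | h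
      · exact hyC h
      · apply hx'
        refine ⟨hx, ?_⟩
        rw [connectedComponentIn_eq hy]
        exact h.2
  refine ⟨hd x (mem_connectedComponentIn hx), ?_⟩
  exact h2.wn_unbounded isPreconnected_connectedComponentIn hd (fun hb => hx' ⟨hx, hb⟩)
    (mem_connectedComponentIn hx)

lemma wn_beta (h1 : LP α β) (h2 : LP α σ) (h3 : LP β σ)
    (hσ : ∀ t ∈ Ioo (0 : ℝ) 1, σ t ∈ JordanInterior (cv α β)) {t : ℝ} (ht : t ∈ Ioo (0 : ℝ) 1) :
    β t ∉ cv α σ ∧ wn α σ (β t) = 0 := by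
  have hne : (JordanInterior (cv α β)).Nonempty := ⟨σ (1 / 2), hσ _ (by norm_num)⟩
  have hnot : β t ∉ cv α σ := by
    rintro (h | h)
    · exact h1.symm.not_mem ht h
    · exact h3.not_mem ht h
  refine ⟨hnot, ?_⟩
  have hcl := h1.symm.mem_closure_ext (cv_comm α β ▸ hne) ht
  rw [← cv_comm α β] at hcl
  obtain ⟨y, hy1, hy2⟩ := mem_closure_iff_nhds.mp hcl _ (h2.wn_eventually hnot)
  rw [mem_setOf_eq] at hy1
  rw [← hy1]
  exact (wn_ext h1 h2 hσ hy2.1 hy2.2).2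

lemma theta_half (h1 : LP α β) (h2 : LP α σ) (h3 : LP β σ)
    (hσ : ∀ t ∈ Ioo (0 : ℝ) 1, σ t ∈ JordanInterior (cv α β)) :
    IsConnected (JordanInterior (cv α σ)) ∧
      JordanInterior (cv α σ) ⊆ JordanInterior (cv α β) \ σ '' Icc 0 1 ∧
      frontier (JordanInterior (cv α σ)) = cv α σ ∧
      ∀ y ∈ JordanInterior (cv α σ), y ∉ cv β σ ∧ wn β σ y = 0 := by
  have hsub : JordanInterior (cv α σ) ⊆ JordanInterior (cv α β) \ σ '' Icc 0 1 := by
    intro x hx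
    have hw := h2.wn_ne_zero hx
    refine ⟨?_, fun h => hx.1 (Or.inr h)⟩
    by_contra hxP
    by_cases hxC : x ∈ cv α β
    · rcases hxC with h | ⟨t, ht, rfl⟩
      · exact hx.1 (Or.inl h)
      · rcases ht.1.eq_or_lt with rfl | h0
        · exact hx.1 (Or.inl ⟨0, zero_mem, h1.h0⟩)
        rcases ht.2.eq_or_lt with rfl | h1'
        · exact hx.1 (Or.inl ⟨1, one_mem, h1.h1⟩)
        exact hw (wn_beta h1 h2 h3 hσ ⟨h0, h1'⟩).2
    · exact hw (wn_ext h1 h2 hσ hxC hxP).2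
  have hoff : ∀ y ∈ JordanInterior (cv α σ), y ∉ cv β σ := by
    rintro y hy (h | h)
    · exact (hsub hy).1.1 (Or.inr h)
    · exact (hsub hy).2 h
  have hneP : (JordanInterior (cv α β)).Nonempty := ⟨σ (1 / 2), hσ _ (by norm_num)⟩
  have hhalf : (1 / 2 : ℝ) ∈ Ioo (0 : ℝ) 1 := by norm_num
  obtain ⟨y, hyT, hy0⟩ : ∃ y ∈ JordanInterior (cv α σ), wn β σ y = 0 := by
    obtain ⟨hn, hw⟩ := wn_beta h1.symm h3 h2 (by rwa [cv_comm β α]) hhalf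
    have hcl := (h1.mem_frontier_interior hneP hhalf).1
    obtain ⟨y, ⟨hy1, hy2⟩, hy3⟩ := mem_closure_iff_nhds.mp hcl _
      ((h3.wn_eventually hn).and (h3.closed.isOpen_compl.mem_nhds hn))
    rw [hw] at hy1
    have hyn : y ∉ cv α σ := by
      rintro (h | h)
      · exact hy3.1 (Or.inl h)
      · exact hy2 (Or.inr h)
    refine ⟨y, ?_, hy1⟩
    by_contra hyc
    apply h1.wn_ne_zero hy3
    have e1 := h2.wn_eq_zero hyn hyc
    simp only [wn] at hy1 e1 ⊢
    linear_combination e1 - hy1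
  have hne : (JordanInterior (cv α σ)).Nonempty := ⟨y, hyT⟩
  have hcon := h2.isConnected_interior hne
  refine ⟨hcon, hsub, h2.frontier_interior hne, fun z hz => ⟨hoff z hz, ?_⟩⟩
  rw [h3.wn_const hcon.isPreconnected hoff hz hyT, hy0]

end Theta

lemma comp_eq {X : Type*} [TopologicalSpace X] {W A B : Set X} (hW : W = A ∪ B)
    (hA : IsPreconnected A) (h1 : Disjoint (closure A) B)
    (h2 : Disjoint A (closure B)) {y : X} (hy : y ∈ A) : connectedComponentIn W y = A := by
  have hyW : y ∈ W := hW ▸ Or.inl hy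
  apply Subset.antisymm
  · have hp := isPreconnected_connectedComponentIn (F := W) (x := y)
    have hs := connectedComponentIn_subset W y
    have hm := mem_connectedComponentIn hyW
    intro z hz
    by_contra hzA
    have hzB : z ∈ B := by
      rcases (hW ▸ hs hz : z ∈ A ∪ B) with h | h
      · exact absurd h hzA
      · exact h
    obtain ⟨w, hw, hw1, hw2⟩ := hp (closure B)ᶜ (closure A)ᶜ isClosed_closure.isOpen_compl
      isClosed_closure.isOpen_compl
      (fun w hw => by
        rcases (hW ▸ hs hw : w ∈ A ∪ B) with h | h
        · exact Or.inl (disjoint_left.mp h2 h)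
        · exact Or.inr (disjoint_right.mp h1 h))
      ⟨y, hm, disjoint_left.mp h2 hy⟩ ⟨z, hz, disjoint_right.mp h1 hzB⟩
    rcases (hW ▸ hs hw : w ∈ A ∪ B) with h | h
    · exact hw2 (subset_closure h)
    · exact hw1 (subset_closure h)
  · exact hA.subset_connectedComponentIn hy (hW ▸ subset_union_left)

/-- A simple closed curve is cut by two of its points into two arcs. -/
lemma split {P : Set (ℝ × ℝ)} (hP : IsSimpleClosedCurve P) {p q : ℝ × ℝ} (hpq : p ≠ q)
    (hp : p ∈ P) (hq : q ∈ P) :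
    ∃ α β : ℝ → ℝ × ℝ, LP α β ∧ α 0 = p ∧ α 1 = q ∧ P = cv α β := by
  obtain ⟨f, hf, hi, rfl⟩ := hP
  obtain ⟨u, rfl⟩ := hp
  obtain ⟨v, rfl⟩ := hq
  haveI : Fact ((0 : ℝ) < 1) := ⟨zero_lt_one⟩
  have hsurj : ∀ w : AddCircle (1 : ℝ), ∃ s ∈ Ico (0 : ℝ) 1, f w = f (u + (s : ℝ)) := by
    intro w
    obtain ⟨s, hs, e⟩ := (AddCircle.coe_image_Ico_eq (1 : ℝ) 0 ▸ mem_univ (w - u) :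
      (w - u) ∈ ((↑) : ℝ → AddCircle (1 : ℝ)) '' Ico 0 (0 + 1))
    refine ⟨s, by simpa using hs, ?_⟩
    rw [e]; congr 1; abel
  set F : ℝ → ℝ × ℝ := fun s => f (u + (s : AddCircle (1 : ℝ))) with hF
  have hFc : Continuous F := hf.comp (continuous_const.add (AddCircle.continuous_mk' 1))
  have hinj : ∀ s t : ℝ, 0 ≤ s → s ≤ t → t ≤ 1 → F s = F t → s = t ∨ (s = 0 ∧ t = 1) := by
    intro s t hs hst ht e
    have e1 := add_left_cancel (hi e)
    rw [eq_comm, ← sub_eq_zero, ← AddCircle.coe_sub, AddCircle.coe_eq_zero_iff] at e1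
    obtain ⟨n, hn⟩ := e1
    rw [zsmul_eq_mul, mul_one] at hn
    have hn0 : (-1 : ℝ) < n := by linarith
    have hn1 : (n : ℝ) < 2 := by linarith
    have hn0' : -1 < n := by exact_mod_cast hn0
    have hn1' : n < 2 := by exact_mod_cast hn1
    obtain rfl | rfl : n = 0 ∨ n = 1 := by omega
    · left; push_cast at hn; linarith
    · right; push_cast at hn; constructor <;> linarith
  have hF01 : F 0 = F 1 := by
    have := AddCircle.coe_period (1 : ℝ)
    simp only [hF]
    rw [this, AddCircle.coe_zero]
  have hF0 : F 0 = f u := by simp [hF]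
  obtain ⟨c, hc, hcv⟩ := hsurj v
  change f v = F c at hcv
  have hc0 : 0 < c := by
    rcases hc.1.eq_or_lt with h | h
    · exfalso; apply hpq; rw [hcv, ← h, hF0]
    · exact h
  have hc1 : c < 1 := hc.2
  have r1 : ∀ t ∈ Icc (0 : ℝ) 1, 0 ≤ c * t ∧ c * t ≤ c := fun t ht =>
    ⟨mul_nonneg hc0.le ht.1, by nlinarith [ht.2]⟩
  have r2 : ∀ t ∈ Icc (0 : ℝ) 1, c ≤ 1 - (1 - c) * t ∧ 1 - (1 - c) * t ≤ 1 := fun t ht =>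
    ⟨by nlinarith [ht.2], by nlinarith [ht.1]⟩
  have m1 : ∀ s t : ℝ, c * s = c * t → s = t := fun s t h => mul_left_cancel₀ hc0.ne' h
  have m2 : ∀ s t : ℝ, 1 - (1 - c) * s = 1 - (1 - c) * t → s = t := fun s t h =>
    mul_left_cancel₀ (sub_pos.mpr hc1).ne' (by linarith)
  refine ⟨fun t => F (c * t), fun t => F (1 - (1 - c) * t),
    ⟨by fun_prop, by fun_prop, ?_, ?_, ?_, ?_, ?_⟩, ?_, ?_, ?_⟩
  · intro s hs t ht e
    have h1 := r1 s hs
    have h2 := r1 t ht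
    rcases le_total (c * s) (c * t) with h | h
    · rcases hinj _ _ h1.1 h (by linarith) e with h | h
      · exact m1 _ _ h
      · linarith
    · rcases hinj _ _ h2.1 h (by linarith) e.symm with h | h
      · exact (m1 _ _ h).symm
      · linarith
  · intro s hs t ht e
    have h1 := r2 s hs
    have h2 := r2 t ht
    rcases le_total (1 - (1 - c) * s) (1 - (1 - c) * t) with h | h
    · rcases hinj _ _ (by linarith) h h2.2 e with h | h
      · exact m2 _ _ h
      · linarith
    · rcases hinj _ _ (by linarith) h h1.2 e.symm with h | h
      · exact (m2 _ _ h).symm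
      · linarith
  · simpa using hF01
  · simp
  · intro s hs t ht e
    have h1 := r1 s hs
    have h2 := r2 t ht
    rcases hinj _ _ h1.1 (by linarith) h2.2 e with h | h
    · right
      exact ⟨m1 _ _ (by linarith), m2 _ _ (by linarith)⟩
    · left
      exact ⟨m1 _ _ (by linarith), m2 _ _ (by linarith)⟩
  · simpa using hF0
  · simpa using hcv.symm
  · ext z
    constructor
    · rintro ⟨w, rfl⟩
      obtain ⟨s, hs, e⟩ := hsurj w
      rw [e]
      rcases le_total s c with h | h
      · left
        refine ⟨s / c, ⟨div_nonneg hs.1 hc0.le, (div_le_one hc0).mpr h⟩, ?_⟩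
        change F (c * (s / c)) = F s
        rw [mul_div_cancel₀ _ hc0.ne']
      · right
        have hc' : 0 < 1 - c := by linarith
        refine ⟨(1 - s) / (1 - c), ⟨div_nonneg (by linarith [hs.2]) hc'.le,
          (div_le_one hc').mpr (by linarith)⟩, ?_⟩
        change F (1 - (1 - c) * ((1 - s) / (1 - c))) = F s
        rw [mul_div_cancel₀ _ hc'.ne']
        congr 1; ring
    · rintro (⟨t, -, rfl⟩ | ⟨t, -, rfl⟩) <;> exact ⟨_, rfl⟩

end JArc

/-- Jordan arc separation in a disc: if `S` is a simple arc with endpoints `p, q` on a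
simple closed curve `P` and interior in the interior of `P`, then `P \ {p, q}` splits
into two arcs `A₁, A₂` (its two connected components), and `int P \ S` consists of
exactly two connected components `T₁, T₂`, bounded by `A₁ ∪ S` and `A₂ ∪ S`. -/
theorem jordan_arc_separation (P S : Set (ℝ × ℝ)) (p q : ℝ × ℝ)
    (hP : IsSimpleClosedCurve P) (hS : IsArc S p q) (hpq : p ≠ q)
    (hpP : p ∈ P) (hqP : q ∈ P) (hSP : S ∩ P = {p, q})
    (hSint : S \ {p, q} ⊆ JordanInterior P) :
    ∃ A₁ A₂ : Set (ℝ × ℝ), A₁ ≠ A₂ ∧ IsConnected A₁ ∧ IsConnected A₂ ∧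
      Disjoint A₁ A₂ ∧ P \ {p, q} = A₁ ∪ A₂ ∧
      (∀ y ∈ P \ ({p, q} : Set (ℝ × ℝ)),
        connectedComponentIn (P \ {p, q}) y = A₁ ∨
        connectedComponentIn (P \ {p, q}) y = A₂) ∧
      ∃ T₁ T₂ : Set (ℝ × ℝ), T₁ ≠ T₂ ∧ IsConnected T₁ ∧ IsConnected T₂ ∧
        Disjoint T₁ T₂ ∧ JordanInterior P \ S = T₁ ∪ T₂ ∧
        (∀ y ∈ JordanInterior P \ S,
          connectedComponentIn (JordanInterior P \ S) y = T₁ ∨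
          connectedComponentIn (JordanInterior P \ S) y = T₂) ∧
        frontier T₁ = A₁ ∪ S ∧ frontier T₂ = A₂ ∪ S := by
  classical
  obtain ⟨α, β, h1, hα0, hα1, rfl⟩ := JArc.split hP hpq hpP hqP
  obtain ⟨σ, cσ, iσ, hσ0, hσ1, rfl⟩ := hS
  have hβ0 : β 0 = p := h1.h0 ▸ hα0
  have hβ1 : β 1 = q := h1.h1 ▸ hα1
  -- interior points of `σ` are not endpoints
  have inner : ∀ γ : ℝ → ℝ × ℝ, Set.InjOn γ (Set.Icc 0 1) → γ 0 = p → γ 1 = q →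
      ∀ t ∈ Set.Icc (0 : ℝ) 1, (γ t = p ↔ t = 0) ∧ (γ t = q ↔ t = 1) := by
    intro γ hi h0 h1 t ht
    refine ⟨⟨fun h => hi ht JArc.zero_mem (h.trans h0.symm), fun h => h ▸ h0⟩,
      ⟨fun h => hi ht JArc.one_mem (h.trans h1.symm), fun h => h ▸ h1⟩⟩
  have iα := inner α h1.ia hα0 hα1
  have iβ := inner β h1.ib hβ0 hβ1
  have iσ' := inner σ iσ hσ0 hσ1
  have mk : ∀ γ : ℝ → ℝ × ℝ, ContinuousOn γ (Set.Icc 0 1) → Set.InjOn γ (Set.Icc 0 1) →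
      γ 0 = p → γ 1 = q → γ '' Set.Icc 0 1 ⊆ JArc.cv α β → JArc.LP γ σ := by
    intro γ hc hi h0 h1 hsub
    refine ⟨hc, cσ, hi, iσ, h0.trans hσ0.symm, h1.trans hσ1.symm, fun s hs t ht e => ?_⟩
    have hm : σ t ∈ σ '' Set.Icc 0 1 ∩ JArc.cv α β := ⟨⟨t, ht, rfl⟩, hsub ⟨s, hs, e⟩⟩
    rw [hSP] at hm
    have iγ := inner γ hi h0 h1 s hs
    rcases hm with h | h
    · exact Or.inl ⟨iγ.1.mp (e.trans h), (iσ' t ht).1.mp h⟩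
    · exact Or.inr ⟨iγ.2.mp (e.trans h), (iσ' t ht).2.mp h⟩
  have h2 : JArc.LP α σ := mk α h1.ca h1.ia hα0 hα1 Set.subset_union_left
  have h3 : JArc.LP β σ := mk β h1.cb h1.ib hβ0 hβ1 Set.subset_union_right
  have hσ : ∀ t ∈ Set.Ioo (0 : ℝ) 1, σ t ∈ JordanInterior (JArc.cv α β) := by
    intro t ht
    have ht' := Set.Ioo_subset_Icc_self ht
    refine hSint ⟨⟨t, ht', rfl⟩, ?_⟩
    rintro (h | h)
    · exact ht.1.ne' ((iσ' t ht').1.mp h)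
    · exact ht.2.ne ((iσ' t ht').2.mp h)
  obtain ⟨cT1, sT1, fT1, wT1⟩ := JArc.theta_half h1 h2 h3 hσ
  obtain ⟨cT2, sT2, fT2, wT2⟩ := JArc.theta_half h1.symm h3 h2 (by rwa [JArc.cv_comm β α])
  rw [JArc.cv_comm β α] at sT2
  have hhalf : (1 / 2 : ℝ) ∈ Set.Ioo (0 : ℝ) 1 := by norm_num
  have ho : Set.Ioo (0 : ℝ) 1 ⊆ Set.Icc 0 1 := Set.Ioo_subset_Icc_self
  have cc : ∀ γ : ℝ → ℝ × ℝ, ContinuousOn γ (Set.Icc 0 1) →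
      IsConnected (γ '' Set.Ioo (0 : ℝ) 1) ∧
      closure (γ '' Set.Ioo (0 : ℝ) 1) ⊆ γ '' Set.Icc 0 1 := fun γ hc =>
    ⟨(isConnected_Ioo zero_lt_one).image _ (hc.mono ho),
      closure_minimal (Set.image_mono ho) (isCompact_Icc.image_of_continuousOn hc).isClosed⟩
  have dA1 : Disjoint (closure (α '' Set.Ioo (0 : ℝ) 1)) (β '' Set.Ioo (0 : ℝ) 1) := by
    rw [Set.disjoint_right]
    rintro _ ⟨t, ht, rfl⟩ h
    exact h1.symm.not_mem ht ((cc α h1.ca).2 h)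
  have dA2 : Disjoint (α '' Set.Ioo (0 : ℝ) 1) (closure (β '' Set.Ioo (0 : ℝ) 1)) := by
    rw [Set.disjoint_left]
    rintro _ ⟨t, ht, rfl⟩ h
    exact h1.not_mem ht ((cc β h1.cb).2 h)
  have dA : Disjoint (α '' Set.Ioo (0 : ℝ) 1) (β '' Set.Ioo (0 : ℝ) 1) :=
    dA1.mono_left subset_closure
  have arc_diff : ∀ γ : ℝ → ℝ × ℝ, Set.InjOn γ (Set.Icc 0 1) → γ 0 = p → γ 1 = q →
      γ '' Set.Icc 0 1 \ {p, q} = γ '' Set.Ioo (0 : ℝ) 1 := by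
    intro γ hi h0 h1
    ext z
    constructor
    · rintro ⟨⟨t, ht, rfl⟩, hz⟩
      rw [Set.mem_insert_iff, Set.mem_singleton_iff, not_or, (inner γ hi h0 h1 t ht).1,
        (inner γ hi h0 h1 t ht).2] at hz
      exact ⟨t, ⟨lt_of_le_of_ne ht.1 (Ne.symm hz.1), lt_of_le_of_ne ht.2 hz.2⟩, rfl⟩
    · rintro ⟨t, ht, rfl⟩
      refine ⟨⟨t, ho ht, rfl⟩, ?_⟩
      rw [Set.mem_insert_iff, Set.mem_singleton_iff, not_or, (inner γ hi h0 h1 t (ho ht)).1,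
        (inner γ hi h0 h1 t (ho ht)).2]
      exact ⟨ht.1.ne', ht.2.ne⟩
  have hPA : JArc.cv α β \ {p, q} = α '' Set.Ioo 0 1 ∪ β '' Set.Ioo 0 1 := by
    rw [JArc.cv, Set.union_diff_distrib, arc_diff α h1.ia hα0 hα1, arc_diff β h1.ib hβ0 hβ1]
  have hT : JordanInterior (JArc.cv α β) \ σ '' Set.Icc 0 1 =
      JordanInterior (JArc.cv α σ) ∪ JordanInterior (JArc.cv β σ) := by
    apply Set.Subset.antisymm
    · rintro x ⟨hx, hxs⟩
      by_contra hn
      rw [Set.mem_union, not_or] at hn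
      apply h1.wn_ne_zero hx
      have e1 := h2.wn_eq_zero (x := x) (by
        rintro (h | h)
        · exact hx.1 (Or.inl h)
        · exact hxs h) hn.1
      have e2 := h3.wn_eq_zero (x := x) (by
        rintro (h | h)
        · exact hx.1 (Or.inr h)
        · exact hxs h) hn.2
      simp only [JArc.wn] at e1 e2 ⊢
      linear_combination e1 - e2
    · exact Set.union_subset sT1 sT2
  have dT : Disjoint (JordanInterior (JArc.cv α σ)) (JordanInterior (JArc.cv β σ)) := by
    rw [Set.disjoint_left]
    intro x hx hx'
    exact h3.wn_ne_zero hx' (wT1 x hx).2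
  have oT1 := JArc.isOpen_interior h2.closed
  have oT2 := JArc.isOpen_interior h3.closed
  have dT1 := dT.closure_left oT2
  have dT2 := dT.closure_right oT1
  have fr : ∀ γ : ℝ → ℝ × ℝ, Set.InjOn γ (Set.Icc 0 1) → γ 0 = p → γ 1 = q →
      JArc.cv γ σ = γ '' Set.Ioo 0 1 ∪ σ '' Set.Icc 0 1 := by
    intro γ hi h0 h1
    rw [← arc_diff γ hi h0 h1, JArc.cv]
    ext z
    by_cases hz : z ∈ ({p, q} : Set (ℝ × ℝ))
    · have : z ∈ σ '' Set.Icc 0 1 := by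
        rcases hz with h | h
        · exact ⟨0, JArc.zero_mem, hσ0.trans h.symm⟩
        · exact ⟨1, JArc.one_mem, hσ1.trans h.symm⟩
      exact ⟨fun _ => Or.inr this, fun _ => Or.inr this⟩
    · exact ⟨fun h => h.imp (fun h => ⟨h, hz⟩) id, fun h => h.imp (fun h => h.1) id⟩
  refine ⟨α '' Set.Ioo 0 1, β '' Set.Ioo 0 1, dA.ne (cc α h1.ca).1.nonempty.ne_empty,
    (cc α h1.ca).1, (cc β h1.cb).1, dA, hPA, ?_,
    JordanInterior (JArc.cv α σ), JordanInterior (JArc.cv β σ), dT.ne cT1.nonempty.ne_empty,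
    cT1, cT2, dT, hT, ?_, ?_, ?_⟩
  · intro y hy
    rw [hPA] at hy
    rcases hy with hy | hy
    · exact Or.inl (JArc.comp_eq hPA (cc α h1.ca).1.isPreconnected dA1 dA2 hy)
    · exact Or.inr (JArc.comp_eq (hPA.trans (Set.union_comm _ _)) (cc β h1.cb).1.isPreconnected
        dA2.symm dA1.symm hy)
  · intro y hy
    rw [hT] at hy
    rcases hy with hy | hy
    · exact Or.inl (JArc.comp_eq hT cT1.isPreconnected dT1 dT2 hy)
    · exact Or.inr (JArc.comp_eq (hT.trans (Set.union_comm _ _)) cT2.isPreconnected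
        dT2.symm dT1.symm hy)
  · rw [fT1, fr α h1.ia hα0 hα1]
  · rw [fT2, fr β h1.ib hβ0 hβ1]
end

section
/- Interleaved interior chords must cross: if s, u, t, v are four distinct points in cyclic order on a simple closed curve P, and α is a simple arc from s to t, β a simple arc from u to v, both with interiors contained in int P, then α and β intersect. -/
/-- Four distinct points `s, u, t, v` on a simple closed curve `P` are interleaved
(occur in this cyclic order) when `u` and `v` lie on different arcs of `P` determined
by `s` and `t`. -/
def Interleaved (P : Set (ℝ × ℝ)) (s u t v : ℝ × ℝ) : Prop :=
  s ∈ P ∧ u ∈ P ∧ t ∈ P ∧ v ∈ P ∧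
    [s, u, t, v].Nodup ∧
    connectedComponentIn (P \ {s, t}) u ≠ connectedComponentIn (P \ {s, t}) v

namespace ChordAux

open Set Topology Metric

/-- The identification of the real plane with the complex plane. -/
noncomputable def toC : (ℝ × ℝ) ≃L[ℝ] ℂ := Complex.equivRealProdCLM.symm

/-- `(z - p) / (z - q)` has a continuous logarithm on `K`. -/
def HasLog (K : Set (ℝ × ℝ)) (p q : ℝ × ℝ) : Prop :=
  ∃ φ : ℝ × ℝ → ℂ, ContinuousOn φ K ∧
    ∀ z ∈ K, toC z - toC p = (toC z - toC q) * Complex.exp (φ z)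

lemma toC_cont : Continuous toC := toC.continuous

lemma toC_sub_ne {z p : ℝ × ℝ} (h : z ≠ p) : toC z - toC p ≠ 0 := by
  intro h'
  exact h (toC.injective (sub_eq_zero.1 h'))

/-- The boundary of a component of the complement of a closed set lies in that set. -/
lemma frontier_component {X : Type*} [TopologicalSpace X] [LocallyConnectedSpace X]
    {K : Set X} (hK : IsClosed K) (p : X) : frontier (connectedComponentIn Kᶜ p) ⊆ K := by
  intro a ha
  by_contra haK
  have hU : IsOpen (connectedComponentIn Kᶜ p) := hK.isOpen_compl.connectedComponentIn
  have hV : IsOpen (connectedComponentIn Kᶜ a) := hK.isOpen_compl.connectedComponentIn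
  have haV : a ∈ connectedComponentIn Kᶜ a := mem_connectedComponentIn haK
  rw [hU.frontier_eq] at ha
  obtain ⟨b, hbV, hbU⟩ := mem_closure_iff.1 ha.1 _ hV haV
  have h1 := connectedComponentIn_eq hbV
  have h2 := connectedComponentIn_eq hbU
  exact ha.2 (by rw [h2, ← h1]; exact haV)

/-- A continuous function with constant exponential is constant on preconnected sets. -/
lemma const_of_exp_one {X : Type*} [TopologicalSpace X] {S : Set X} (hS : IsPreconnected S)
    {h : X → ℂ} (hc : ContinuousOn h S) (h1 : ∀ x ∈ S, Complex.exp (h x) = 1) :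
    ∃ c : ℂ, Complex.exp c = 1 ∧ ∀ x ∈ S, h x = c := by
  have hT : IsDiscrete
      ((AddSubgroup.zmultiples (2 * Real.pi * Complex.I) : AddSubgroup ℂ) : Set ℂ) :=
    ⟨NormedSpace.discreteTopology_zmultiples _⟩
  obtain ⟨c, hcT, hcS⟩ := hS.eqOn_const_of_mapsTo hT hc (fun x hx => by
    obtain ⟨n, hn⟩ := Complex.exp_eq_one_iff.1 (h1 x hx)
    exact AddSubgroup.mem_zmultiples_iff.2 ⟨n, by rw [hn]; simp⟩) ⟨0, AddSubgroup.zero_mem _⟩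
  refine ⟨c, ?_, hcS⟩
  obtain ⟨n, hn⟩ := AddSubgroup.mem_zmultiples_iff.1 hcT
  exact Complex.exp_eq_one_iff.2 ⟨n, by rw [← hn]; simp⟩

lemma exists_log {X : Type*} [TopologicalSpace X] [SimplyConnectedSpace X]
    [LocallyPathConnectedSpace X] [Nonempty X] {g : X → ℂ} (hg : Continuous g)
    (h0 : ∀ x, g x ≠ 0) : ∃ L : X → ℂ, Continuous L ∧ ∀ x, Complex.exp (L x) = g x := by
  obtain ⟨x₀⟩ := ‹Nonempty X›
  rcases Complex.isCoveringMapOn_exp.existsUnique_continuousMap_lifts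
    (⟨g, hg⟩ : C(X, ℂ)) (a₀ := x₀) (Complex.exp_log (h0 x₀))
    (fun x ↦ h0 x) with ⟨f, ⟨-, hf⟩, -⟩
  exact ⟨f, f.continuous, fun x => congrFun hf x⟩

lemma no_log_circle {r : ℝ} {L : ℝ → ℂ} (hL : Continuous L)
    (h : ∀ θ : ℝ, Complex.exp (L θ) = r * Complex.exp (θ * Complex.I)) (hr : r ≠ 0)
    (hper : L (2 * Real.pi) = L 0) : False := by
  have hr' : (r : ℂ) ≠ 0 := by exact_mod_cast hr
  obtain ⟨c, -, hc⟩ := const_of_exp_one (S := univ) isPreconnected_univ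
    (h := fun θ : ℝ => L θ - θ * Complex.I - L 0) (by fun_prop) (by
      intro θ _
      have h0 := h 0
      simp only [Complex.ofReal_zero, zero_mul, Complex.exp_zero, mul_one] at h0
      rw [Complex.exp_sub, Complex.exp_sub, h, h0]
      field_simp)
  have e1 := hc 0 (mem_univ _)
  have e2 := hc (2 * Real.pi) (mem_univ _)
  rw [← e1, hper] at e2
  simp at e2

/-- Eilenberg's criterion, hard direction. -/
lemma not_hasLog {K : Set (ℝ × ℝ)} (hK : IsClosed K) {p q : ℝ × ℝ} (hp : p ∉ K)
    (hb : Bornology.IsBounded (connectedComponentIn Kᶜ p))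
    (hqU : q ∉ connectedComponentIn Kᶜ p) : ¬ HasLog K p q := by
  classical
  rintro ⟨φ, hφ, hφe⟩
  set U := connectedComponentIn Kᶜ p with hU
  have hpU : p ∈ U := mem_connectedComponentIn hp
  obtain ⟨g, hg⟩ := ContinuousMap.exists_restrict_eq hK
    (⟨K.domRestrict φ, continuousOn_iff_continuous_domRestrict.mp hφ⟩ : C(K, ℂ))
  have hg' : ∀ z ∈ K, g z = φ z := fun z hz => by
    have := congrArg (fun F : C(K, ℂ) => F ⟨z, hz⟩) hg
    simpa using this
  let G : ℝ × ℝ → ℂ := fun z =>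
    if z ∈ U then (toC z - toC q) * Complex.exp (g z) else toC z - toC p
  have hGc : Continuous G := by
    refine Continuous.if ?_ ?_ ?_
    · intro a ha
      have haK : a ∈ K := frontier_component hK p ha
      rw [hφe a haK, hg' a haK]
    · have := toC_cont
      fun_prop
    · have := toC_cont
      fun_prop
  have hG0 : ∀ z, G z ≠ 0 := by
    intro z
    by_cases hz : z ∈ U
    · simp only [G, hz, if_true]
      exact mul_ne_zero (toC_sub_ne (fun h => hqU (h ▸ hz))) (Complex.exp_ne_zero _)
    · simp only [G, hz, if_false]
      exact toC_sub_ne (fun h => hz (h ▸ hpU))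
  obtain ⟨L, hLc, hL⟩ := exists_log hGc hG0
  have hb' : Bornology.IsBounded (toC '' U) :=
    toC.toContinuousLinearMap.lipschitz.isBounded_image hb
  obtain ⟨M, hM⟩ := hb'.subset_closedBall (toC p)
  have hM0 : 0 ≤ M := by
    have := hM ⟨p, hpU, rfl⟩
    simpa using this
  let c : ℝ → ℝ × ℝ := fun θ => toC.symm (toC p + (M + 1 : ℝ) * Complex.exp (θ * Complex.I))
  have hcc : Continuous c := by
    have := toC.symm.continuous
    fun_prop
  refine no_log_circle (r := M + 1) (L := fun θ => L (c θ)) (hLc.comp hcc) ?_ (by positivity) ?_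
  · intro θ
    have hcU : c θ ∉ U := by
      intro h
      have := hM ⟨_, h, rfl⟩
      simp only [c, ContinuousLinearEquiv.apply_symm_apply, mem_closedBall, dist_eq_norm,
        add_sub_cancel_left, norm_mul, Complex.norm_exp_ofReal_mul_I, mul_one,
        Complex.norm_real, Real.norm_eq_abs] at this
      rw [abs_of_nonneg (by positivity)] at this
      linarith
    rw [hL]
    simp only [G, hcU, if_false]
    simp [c]
  · simp [c, Complex.exp_two_pi_mul_I]

lemma HasLog.symm {K : Set (ℝ × ℝ)} {p q : ℝ × ℝ} (h : HasLog K p q) : HasLog K q p := by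
  obtain ⟨φ, hφ, he⟩ := h
  refine ⟨fun z => - φ z, hφ.neg, fun z hz => ?_⟩
  rw [he z hz, mul_assoc, ← Complex.exp_add]
  simp

lemma HasLog.trans {K : Set (ℝ × ℝ)} {p q r : ℝ × ℝ} (h : HasLog K p q) (h' : HasLog K q r) :
    HasLog K p r := by
  obtain ⟨φ, hφ, he⟩ := h
  obtain ⟨ψ, hψ, he'⟩ := h'
  refine ⟨fun z => ψ z + φ z, hψ.add hφ, fun z hz => ?_⟩
  rw [he z hz, he' z hz, Complex.exp_add, mul_assoc]

lemma HasLog.mono {K K' : Set (ℝ × ℝ)} {p q : ℝ × ℝ} (h : HasLog K p q) (hs : K' ⊆ K) :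
    HasLog K' p q := by
  obtain ⟨φ, hφ, he⟩ := h
  exact ⟨φ, hφ.mono hs, fun z hz => he z (hs hz)⟩

/-- Eilenberg's criterion, easy direction. -/
lemma hasLog_of_preconnected {K T : Set (ℝ × ℝ)} (hK : IsClosed K) (hT : IsPreconnected T)
    (hd : ∀ x ∈ T, x ∉ K) {p q : ℝ × ℝ} (hp : p ∈ T) (hq : q ∈ T) : HasLog K p q := by
  refine hT.induction₂' (HasLog K) ?_ (fun x y z _ _ _ h h' => h.trans h') hp hq
  intro x hx
  have hK' : IsClosed (toC '' K) := toC.toHomeomorph.isClosedMap K hK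
  have hx' : toC x ∈ (toC '' K)ᶜ := by
    rintro ⟨y, hy, hyx⟩
    exact hd x hx (toC.injective hyx ▸ hy)
  obtain ⟨δ, hδ, hδs⟩ := Metric.isOpen_iff.1 hK'.isOpen_compl _ hx'
  have hev : ∀ᶠ y in 𝓝 x, toC y ∈ ball (toC x) δ :=
    toC_cont.continuousAt.eventually (ball_mem_nhds _ hδ)
  refine (hev.filter_mono nhdsWithin_le_nhds).mono ?_
  intro y hy
  have key : HasLog K y x := by
    have hne : ∀ z ∈ K, toC z - toC x ≠ 0 := fun z hz =>
      toC_sub_ne (fun h => hd x hx (h ▸ hz))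
    have hslit : ∀ z ∈ K, (toC z - toC y) / (toC z - toC x) ∈ Complex.slitPlane := by
      intro z hz
      have h1 : δ ≤ ‖toC z - toC x‖ := by
        by_contra hlt
        push Not at hlt
        exact hδs (by rwa [mem_ball, dist_eq_norm]) ⟨z, hz, rfl⟩
      have h2 : (toC z - toC y) / (toC z - toC x) =
          1 + (toC x - toC y) / (toC z - toC x) := by
        have := hne z hz
        field_simp
        ring
      rw [h2]
      apply Complex.mem_slitPlane_of_norm_lt_one
      rw [norm_div, div_lt_one (by linarith)]
      rw [mem_ball, dist_comm, dist_eq_norm] at hy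
      linarith
    refine ⟨fun z => Complex.log ((toC z - toC y) / (toC z - toC x)), ?_, ?_⟩
    · refine ContinuousOn.clog ?_ hslit
      have := toC_cont
      exact ContinuousOn.div (by fun_prop) (by fun_prop) hne
    · intro z hz
      rw [Complex.exp_log (Complex.slitPlane_ne_zero (hslit z hz))]
      have := hne z hz
      field_simp
  exact ⟨key.symm, key⟩

/-- Janiszewski-type gluing of logarithms. -/
lemma hasLog_union {K₁ K₂ : Set (ℝ × ℝ)} (h₁ : IsClosed K₁) (h₂ : IsClosed K₂)
    (hc : IsPreconnected (K₁ ∩ K₂)) {p q : ℝ × ℝ} (hq : q ∉ K₁)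
    (l₁ : HasLog K₁ p q) (l₂ : HasLog K₂ p q) : HasLog (K₁ ∪ K₂) p q := by
  classical
  obtain ⟨φ₁, c₁, e₁⟩ := l₁
  obtain ⟨φ₂, c₂, e₂⟩ := l₂
  obtain ⟨c, hc1, hcc⟩ := const_of_exp_one hc (h := fun z => φ₁ z - φ₂ z)
    ((c₁.mono inter_subset_left).sub (c₂.mono inter_subset_right)) (by
      intro z hz
      have h := e₁ z hz.1
      rw [e₂ z hz.2] at h
      have hzq : z ≠ q := by
        rintro rfl
        exact hq hz.1
      have h' := mul_left_cancel₀ (toC_sub_ne hzq) h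
      rw [Complex.exp_sub, h', div_self (Complex.exp_ne_zero _)])
  let φ : ℝ × ℝ → ℂ := fun z => if z ∈ K₁ then φ₁ z else φ₂ z + c
  have E₁ : ∀ z ∈ K₁, φ z = φ₁ z := fun z hz => by simp [φ, hz]
  have E₂ : ∀ z ∈ K₂, φ z = φ₂ z + c := fun z hz => by
    by_cases h : z ∈ K₁
    · rw [E₁ z h, ← hcc z ⟨h, hz⟩]; ring
    · simp [φ, h]
  refine ⟨φ, ContinuousOn.union_of_isClosed (c₁.congr E₁)
    ((c₂.add continuousOn_const).congr E₂) h₁ h₂, ?_⟩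
  rintro z (hz | hz)
  · rw [E₁ z hz]; exact e₁ z hz
  · rw [E₂ z hz, Complex.exp_add, hc1, mul_one]; exact e₂ z hz

/-- The outside of a ball in the plane is preconnected. -/
lemma outside_preconnected {R : ℝ} (hR : 0 ≤ R) :
    IsPreconnected {z : ℝ × ℝ | R < ‖z‖} := by
  have hrank : 1 < Module.rank ℝ (ℝ × ℝ) := by
    rw [← Module.finrank_eq_rank]
    simp
  have h0 : IsPreconnected ({0}ᶜ : Set (ℝ × ℝ)) :=
    (isConnected_compl_singleton_of_one_lt_rank hrank 0).isPreconnected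
  have hf : ContinuousOn (fun y : ℝ × ℝ => (1 + R * ‖y‖⁻¹) • y) {0}ᶜ := by
    have hi : ContinuousOn (fun y : ℝ × ℝ => ‖y‖⁻¹) {0}ᶜ :=
      ContinuousOn.inv₀ continuous_norm.continuousOn (fun y hy => norm_ne_zero_iff.2 hy)
    fun_prop
  have himg := h0.image _ hf
  convert himg using 1
  ext z
  constructor
  · intro hz
    have hz : R < ‖z‖ := hz
    have hz0 : 0 < ‖z‖ := lt_of_le_of_lt hR hz
    have hpos : 0 < 1 - R * ‖z‖⁻¹ := by
      rw [← div_eq_mul_inv, sub_pos, div_lt_one hz0]; exact hz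
    refine ⟨(1 - R * ‖z‖⁻¹) • z, ?_, ?_⟩
    · exact smul_ne_zero hpos.ne' (norm_pos_iff.1 hz0)
    · have hn : ‖(1 - R * ‖z‖⁻¹) • z‖ = ‖z‖ - R := by
        rw [norm_smul, Real.norm_eq_abs, abs_of_pos hpos]
        field_simp
      simp only [hn, smul_smul]
      have h1 : ‖z‖ - R ≠ 0 := by linarith
      have : (1 + R * (‖z‖ - R)⁻¹) * (1 - R * ‖z‖⁻¹) = 1 := by
        field_simp
        ring
      rw [this, one_smul]
  · rintro ⟨y, hy, rfl⟩
    have hy0 : 0 < ‖y‖ := norm_pos_iff.2 hy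
    change R < ‖(1 + R * ‖y‖⁻¹) • y‖
    rw [norm_smul, Real.norm_eq_abs, abs_of_pos (by positivity)]
    have : (1 + R * ‖y‖⁻¹) * ‖y‖ = ‖y‖ + R := by field_simp
    rw [this]
    linarith

instance : Fact ((0 : ℝ) < 1) := ⟨one_pos⟩

/-- On a simple closed curve with a neighbourhood of a point removed, logarithms exist. -/
lemma hasLog_cut {f : AddCircle (1 : ℝ) → ℝ × ℝ} (hf : Continuous f)
    (hinj : Function.Injective f) (a : ℝ) {p q : ℝ × ℝ} (hp : p ∉ range f) (hq : q ∉ range f)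
    {S : Set (AddCircle (1 : ℝ))} (hS : (a : AddCircle (1 : ℝ)) ∉ S) : HasLog (f '' S) p q := by
  have hemb : IsClosedEmbedding f := hf.isClosedEmbedding hinj
  have hpne : ∀ y, toC (f y) - toC p ≠ 0 := fun y => toC_sub_ne (fun h => hp ⟨y, h⟩)
  have hqne : ∀ y, toC (f y) - toC q ≠ 0 := fun y => toC_sub_ne (fun h => hq ⟨y, h⟩)
  let g : ℝ → ℂ := fun x => (toC (f x) - toC p) / (toC (f x) - toC q)
  have hfx : Continuous fun x : ℝ => toC (f (x : AddCircle (1 : ℝ))) :=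
    toC_cont.comp (hf.comp (AddCircle.continuous_mk' 1))
  have hg : Continuous g :=
    Continuous.div (hfx.sub continuous_const) (hfx.sub continuous_const) (fun x => hqne _)
  obtain ⟨L, hLc, hL⟩ := exists_log hg (fun x => div_ne_zero (hpne _) (hqne _))
  let ψ : AddCircle (1 : ℝ) → ℂ := fun y => L (AddCircle.equivIco 1 a y)
  have hψ : ∀ y ∈ S, ContinuousAt ψ y := by
    intro y hy
    have hya : y ≠ a := fun h => hS (h ▸ hy)
    exact hLc.continuousAt.comp
      (continuousAt_subtype_val.comp (AddCircle.continuousAt_equivIco 1 a hya))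
  have hψe : ∀ y, Complex.exp (ψ y) = (toC (f y) - toC p) / (toC (f y) - toC q) := by
    intro y
    have h1 : (((AddCircle.equivIco 1 a y : ℝ)) : AddCircle (1 : ℝ)) = y :=
      (AddCircle.equivIco 1 a).symm_apply_apply y
    have := hL (AddCircle.equivIco 1 a y)
    simp only [g, h1] at this
    exact this
  have hinv : ∀ y, Function.invFun f (f y) = y := Function.leftInverse_invFun hinj
  refine ⟨fun z => ψ (Function.invFun f z), ?_, ?_⟩
  · rintro _ ⟨y, hy, rfl⟩
    rw [ContinuousWithinAt, ← hemb.isEmbedding.map_nhdsWithin_eq, Filter.tendsto_map'_iff]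
    have : (fun z => ψ (Function.invFun f z)) ∘ f = ψ := by
      funext x
      simp [hinv]
    rw [this]
    simp only [hinv]
    exact (hψ y hy).continuousWithinAt
  · rintro _ ⟨y, hy, rfl⟩
    simp only [hinv, hψe]
    have := hqne y
    field_simp

/-- Every point of a simple closed curve is a limit of points of the outer component. -/
lemma accessible {f : AddCircle (1 : ℝ) → ℝ × ℝ} (hf : Continuous f)
    (hinj : Function.Injective f) {R : ℝ} {e w x : ℝ × ℝ} (hR0 : 0 ≤ R)
    (hR : range f ⊆ closedBall 0 R)
    (he : R < ‖e‖) (hw : w ∈ JordanInterior (range f)) (hx : x ∈ range f) {r : ℝ} (hr : 0 < r) :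
    (connectedComponentIn (range f)ᶜ e ∩ ball x r).Nonempty := by
  have hcl : IsClosed (range f) := (isCompact_range hf).isClosed
  have hout : ∀ z : ℝ × ℝ, R < ‖z‖ → z ∉ range f := fun z hz hzf => by
    have := hR hzf
    rw [mem_closedBall_zero_iff] at this
    linarith
  set E := connectedComponentIn (range f)ᶜ e with hE
  have hEo : IsOpen E := hcl.isOpen_compl.connectedComponentIn
  have hEout : {z : ℝ × ℝ | R < ‖z‖} ⊆ E :=
    (outside_preconnected hR0).subset_connectedComponentIn he hout
  have hEw : w ∉ E := by
    intro h
    rw [hE] at h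
    have := connectedComponentIn_eq h
    have hb := hw.2
    rw [← this, ← hE] at hb
    obtain ⟨M, hM⟩ := (hb.subset hEout).subset_closedBall 0
    have hmem : ((max M R + 1, 0) : ℝ × ℝ) ∈ {z : ℝ × ℝ | R < ‖z‖} := by
      change R < ‖((max M R + 1, 0) : ℝ × ℝ)‖
      refine lt_of_lt_of_le ?_ (norm_fst_le _)
      refine lt_of_lt_of_le ?_ (le_abs_self _)
      exact lt_of_le_of_lt (le_max_right M R) (lt_add_one _)
    have h2 := hM hmem
    rw [mem_closedBall_zero_iff] at h2
    have h3 := (le_abs_self _).trans ((norm_fst_le ((max M R + 1, 0) : ℝ × ℝ)).trans h2)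
    have h4 := le_max_left M R
    simp only at h3
    linarith
  by_contra hemp
  rw [not_nonempty_iff_eq_empty] at hemp
  have hdisj : Disjoint (closure E) (ball x r) :=
    (disjoint_iff_inter_eq_empty.2 hemp).closure_left isOpen_ball
  obtain ⟨a', rfl⟩ := hx
  obtain ⟨a, rfl⟩ := QuotientAddGroup.mk_surjective a'
  let S : Set (AddCircle (1 : ℝ)) := {y | f y ∉ ball (f (a : AddCircle (1 : ℝ))) r}
  have hKeq : f '' S = range f \ ball (f (a : AddCircle (1 : ℝ))) r := by
    ext z
    constructor
    · rintro ⟨y, hy, rfl⟩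
      exact ⟨⟨y, rfl⟩, hy⟩
    · rintro ⟨⟨y, rfl⟩, hy⟩
      exact ⟨y, hy, rfl⟩
  have hS : (a : AddCircle (1 : ℝ)) ∉ S := by
    intro h
    exact h (mem_ball_self hr)
  have hlog := hasLog_cut hf hinj a (p := w) (q := e) hw.1 (hout e he) hS
  set K := f '' S with hK
  have hKsub : K ⊆ range f := image_subset_range _ _
  have hKc : IsClosed K := by
    rw [hKeq]
    exact hcl.sdiff isOpen_ball
  have hfr : frontier E ⊆ K := by
    rw [hKeq]
    intro z hz
    exact ⟨frontier_component hcl e hz,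
      fun hzb => disjoint_left.1 hdisj (frontier_subset_closure hz) hzb⟩
  have hwK : w ∉ K := fun h => hw.1 (hKsub h)
  have hdis : Disjoint (connectedComponentIn Kᶜ w) E := by
    by_contra hnd
    rw [not_disjoint_iff_nonempty_inter] at hnd
    have hsub := IsPreconnected.subset_left_of_subset_union (s := connectedComponentIn Kᶜ w)
      hEo isClosed_closure.isOpen_compl
      (disjoint_left.2 fun z hz hz' => hz' (subset_closure hz)) (by
        intro z hz
        by_cases hzE : z ∈ E
        · exact Or.inl hzE
        · refine Or.inr fun hzc => ?_
          have : z ∈ frontier E := by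
            rw [hEo.frontier_eq]
            exact ⟨hzc, hzE⟩
          exact connectedComponentIn_subset _ _ hz (hfr this)) hnd
      isPreconnected_connectedComponentIn
    exact hEw (hsub (mem_connectedComponentIn hwK))
  refine not_hasLog hKc hwK ?_ ?_ hlog
  · refine isBounded_closedBall.subset (t := closedBall (0 : ℝ × ℝ) R) ?_
    intro z hz
    rw [mem_closedBall_zero_iff]
    by_contra h
    push Not at h
    exact disjoint_left.1 hdis hz (hEout h)
  · intro h
    exact disjoint_left.1 hdis h (hEout he)

/-- The interior part of an arc is connected, and comes close to both endpoints. -/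
lemma arc_interior {β : Set (ℝ × ℝ)} {u v : ℝ × ℝ} (hβ : IsArc β u v) {r : ℝ} (hr : 0 < r) :
    IsPreconnected (β \ {u, v}) ∧ ((β \ {u, v}) ∩ ball u r).Nonempty ∧
      ((β \ {u, v}) ∩ ball v r).Nonempty := by
  obtain ⟨g, hg, hinj, rfl, rfl, rfl⟩ := hβ
  have h0 : (0 : ℝ) ∈ Icc (0 : ℝ) 1 := by simp
  have h1 : (1 : ℝ) ∈ Icc (0 : ℝ) 1 := by simp
  have heq : g '' Icc 0 1 \ {g 0, g 1} = g '' Ioo 0 1 := by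
    ext z
    constructor
    · rintro ⟨⟨x, hx, rfl⟩, hz⟩
      simp only [mem_insert_iff, mem_singleton_iff, not_or] at hz
      refine ⟨x, ⟨lt_of_le_of_ne hx.1 ?_, lt_of_le_of_ne hx.2 ?_⟩, rfl⟩
      · rintro rfl
        exact hz.1 rfl
      · rintro rfl
        exact hz.2 rfl
    · rintro ⟨x, hx, rfl⟩
      refine ⟨⟨x, Ioo_subset_Icc_self hx, rfl⟩, ?_⟩
      simp only [mem_insert_iff, mem_singleton_iff, not_or]
      exact ⟨fun h => hx.1.ne' (hinj (Ioo_subset_Icc_self hx) h0 h),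
        fun h => hx.2.ne (hinj (Ioo_subset_Icc_self hx) h1 h)⟩
  rw [heq]
  refine ⟨isPreconnected_Ioo.image _ (hg.mono Ioo_subset_Icc_self), ?_, ?_⟩
  · have hc : ContinuousWithinAt g (Ioo 0 1) 0 := (hg 0 h0).mono Ioo_subset_Icc_self
    have hev := hc.eventually (ball_mem_nhds (g 0) hr)
    have hne : (𝓝[Ioo (0 : ℝ) 1] 0).NeBot := by
      rw [← mem_closure_iff_nhdsWithin_neBot, closure_Ioo (by norm_num)]
      exact h0
    obtain ⟨x, hx, hx'⟩ := (hev.and self_mem_nhdsWithin).exists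
    exact ⟨g x, ⟨x, hx', rfl⟩, hx⟩
  · have hc : ContinuousWithinAt g (Ioo 0 1) 1 := (hg 1 h1).mono Ioo_subset_Icc_self
    have hev := hc.eventually (ball_mem_nhds (g 1) hr)
    have hne : (𝓝[Ioo (0 : ℝ) 1] 1).NeBot := by
      rw [← mem_closure_iff_nhdsWithin_neBot, closure_Ioo (by norm_num)]
      exact h1
    obtain ⟨x, hx, hx'⟩ := (hev.and self_mem_nhdsWithin).exists
    exact ⟨g x, ⟨x, hx', rfl⟩, hx⟩

lemma arc_compact_preconnected {α : Set (ℝ × ℝ)} {s t : ℝ × ℝ} (hα : IsArc α s t) :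
    IsCompact α ∧ IsPreconnected α := by
  obtain ⟨g, hg, -, -, -, rfl⟩ := hα
  exact ⟨isCompact_Icc.image_of_continuousOn hg, isPreconnected_Icc.image _ hg⟩

/-- The splitting of the curve at `s` and `t`. -/
lemma split {f : AddCircle (1 : ℝ) → ℝ × ℝ} (hf : Continuous f)
    (hinj : Function.Injective f) {s u t v : ℝ × ℝ} (h : Interleaved (range f) s u t v) :
    ∃ A₁ A₂ : Set (ℝ × ℝ), IsClosed A₁ ∧ IsClosed A₂ ∧ A₁ ∪ A₂ = range f ∧
      A₁ ∩ A₂ ⊆ {s, t} ∧ u ∉ A₂ ∧ v ∉ A₁ := by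
  obtain ⟨⟨s', rfl⟩, ⟨u', rfl⟩, ⟨t', rfl⟩, ⟨v', rfl⟩, hnd, hne⟩ := h
  simp only [List.nodup_cons, List.mem_cons, List.not_mem_nil, or_false, not_or] at hnd
  obtain ⟨⟨hsu, hst, hsv⟩, ⟨hut, huv⟩, htv, -⟩ := hnd
  haveI : LocallyPathConnectedSpace (AddCircle (1 : ℝ)) :=
    inferInstanceAs (LocallyPathConnectedSpace (Quotient _))
  let K : Set (AddCircle (1 : ℝ)) := {s', t'}
  have hK : IsClosed K := (Set.toFinite K).isClosed
  let D := connectedComponentIn Kᶜ u'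
  have hD : IsOpen D := hK.isOpen_compl.connectedComponentIn
  have huK : u' ∈ Kᶜ := by
    rintro (h | h)
    · exact hsu (congrArg f h.symm)
    · exact hut (congrArg f h)
  have huD : u' ∈ D := mem_connectedComponentIn huK
  have hDK : IsClosed (D ∪ K) := by
    refine isClosed_of_closure_subset ?_
    rw [closure_union, hK.closure_eq]
    refine union_subset ?_ subset_union_right
    rw [closure_eq_self_union_frontier]
    exact union_subset_union_right _ (frontier_component hK u')
  have hemb : IsClosedEmbedding f := hf.isClosedEmbedding hinj
  refine ⟨f '' (D ∪ K), f '' Dᶜ, hemb.isClosedMap _ hDK, hemb.isClosedMap _ hD.isClosed_compl,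
    ?_, ?_, ?_, ?_⟩
  · rw [← image_union, ← image_univ]
    congr 1
    ext z
    by_cases h : z ∈ D <;> simp [h]
  · rw [← image_inter hinj]
    rintro _ ⟨y, ⟨hy | hy, hy'⟩, rfl⟩
    · exact absurd hy hy'
    · rcases hy with rfl | hy
      · exact Or.inl rfl
      · exact Or.inr (congrArg f hy)
  · rintro ⟨y, hy, hyu⟩
    exact hy (hinj hyu ▸ huD)
  · rintro ⟨y, hy, hyv⟩
    obtain rfl := hinj hyv
    rcases hy with hy | hy | hy
    · apply hne
      apply connectedComponentIn_eq
      have hpre : IsPreconnected (f '' D) :=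
        isPreconnected_connectedComponentIn.image _ hf.continuousOn
      refine hpre.subset_connectedComponentIn ⟨u', huD, rfl⟩ ?_ ⟨y, hy, rfl⟩
      rintro _ ⟨x, hx, rfl⟩
      refine ⟨⟨x, rfl⟩, ?_⟩
      have hxK := connectedComponentIn_subset _ _ hx
      rintro (h | h)
      · exact hxK (Or.inl (hinj h))
      · exact hxK (Or.inr (hinj h))
    · exact hsv (congrArg f hy.symm)
    · exact htv (congrArg f hy.symm)

end ChordAux

/-- Interleaved interior chords must cross: if `s, u, t, v` occur in this cyclic order
on a simple closed curve `P`, `α` is a simple arc from `s` to `t` and `β` a simple arc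
from `u` to `v`, both meeting `P` only at their endpoints with interiors in `int P`,
then `α` and `β` intersect. -/
theorem interleaved_interior_chords_cross (P : Set (ℝ × ℝ))
    (hP : IsSimpleClosedCurve P) (s u t v : ℝ × ℝ)
    (hcyc : Interleaved P s u t v)
    (α β : Set (ℝ × ℝ)) (hα : IsArc α s t) (hβ : IsArc β u v)
    (hαP : α ∩ P = {s, t}) (hβP : β ∩ P = {u, v})
    (hαint : α \ {s, t} ⊆ JordanInterior P)
    (hβint : β \ {u, v} ⊆ JordanInterior P) :
    (α ∩ β).Nonempty := by
  obtain ⟨f, hf, hinj, rfl⟩ := hP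
  have hcl : IsClosed (Set.range f) := (isCompact_range hf).isClosed
  by_contra hemp
  have hdisj : ∀ z ∈ α, z ∉ β := fun z hz hz' => hemp ⟨z, hz, hz'⟩
  obtain ⟨A₁, A₂, hA₁, hA₂, hAU, hAI, huA, hvA⟩ := ChordAux.split hf hinj hcyc
  obtain ⟨hαc, hαp⟩ := ChordAux.arc_compact_preconnected hα
  have hsα : s ∈ α := (hαP.symm.subset (Or.inl rfl)).1
  have htα : t ∈ α := (hαP.symm.subset (Or.inr rfl)).1
  have huβ : u ∈ β := (hβP.symm.subset (Or.inl rfl)).1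
  have hvβ : v ∈ β := (hβP.symm.subset (Or.inr rfl)).1
  have huα : u ∉ α := fun h => hdisj u h huβ
  have hvα : v ∉ α := fun h => hdisj v h hvβ
  have hJ₁ : IsClosed (A₁ ∪ α) := hA₁.union hαc.isClosed
  have hJ₂ : IsClosed (A₂ ∪ α) := hA₂.union hαc.isClosed
  have hJI : (A₁ ∪ α) ∩ (A₂ ∪ α) = α := by
    rw [← Set.inter_union_distrib_right]
    refine Set.union_eq_right.2 (hAI.trans ?_)
    rintro z (rfl | rfl)
    · exact hsα
    · exact htα
  obtain ⟨r₂, hr₂, hb₂⟩ := Metric.isOpen_iff.1 hJ₂.isOpen_compl u (fun h => h.elim huA huα)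
  obtain ⟨r₁, hr₁, hb₁⟩ := Metric.isOpen_iff.1 hJ₁.isOpen_compl v (fun h => h.elim hvA hvα)
  obtain ⟨hβpre, ⟨w, hwβ, hwu⟩, -⟩ := ChordAux.arc_interior hβ hr₂
  obtain ⟨-, -, ⟨w', hwβ', hwv⟩⟩ := ChordAux.arc_interior hβ hr₁
  obtain ⟨R₀, hR₀⟩ := (isCompact_range hf).isBounded.subset_closedBall 0
  have hR : Set.range f ⊆ Metric.closedBall 0 (max R₀ 0) :=
    hR₀.trans (Metric.closedBall_subset_closedBall (le_max_left _ _))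
  have hR0 : 0 ≤ max R₀ 0 := le_max_right _ _
  generalize max R₀ 0 = R at hR hR0
  obtain ⟨e, he⟩ : ∃ e : ℝ × ℝ, R < ‖e‖ := NormedSpace.exists_lt_norm ℝ _ R
  have hw := hβint hwβ
  obtain ⟨e₁, he₁, he₁u⟩ :=
    ChordAux.accessible hf hinj hR0 hR he hw hcyc.2.1 hr₂
  obtain ⟨e₂, he₂, he₂v⟩ :=
    ChordAux.accessible hf hinj hR0 hR he hw hcyc.2.2.2.1 hr₁
  have hunb : ¬ Bornology.IsBounded (connectedComponentIn (Set.range f)ᶜ e) := by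
    intro hb
    have hsub : {z : ℝ × ℝ | R < ‖z‖} ⊆ connectedComponentIn (Set.range f)ᶜ e :=
      (ChordAux.outside_preconnected hR0).subset_connectedComponentIn he (by
        intro z hz hzf
        have h1 := hR hzf
        rw [mem_closedBall_zero_iff] at h1
        exact absurd hz (not_lt.2 h1))
    obtain ⟨M, hM⟩ := (hb.subset hsub).subset_closedBall 0
    obtain ⟨z, hz⟩ := NormedSpace.exists_lt_norm ℝ (ℝ × ℝ) (max M R)
    have h1 := hM (show z ∈ {z : ℝ × ℝ | R < ‖z‖} from (le_max_right M R).trans_lt hz)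
    rw [mem_closedBall_zero_iff] at h1
    exact absurd ((le_max_left M R).trans_lt hz) (not_lt.2 h1)
  -- the outer component misses the curve and `α`
  have hEP : ∀ z ∈ connectedComponentIn (Set.range f)ᶜ e, z ∉ Set.range f :=
    fun z hz => connectedComponentIn_subset _ _ hz
  have hEα : ∀ z ∈ connectedComponentIn (Set.range f)ᶜ e, z ∉ α := by
    intro z hz hzα
    by_cases hzs : z ∈ ({s, t} : Set (ℝ × ℝ))
    · exact hEP z hz (hαP.symm.subset hzs).2
    · have hb := (hαint ⟨hzα, hzs⟩).2
      rw [← connectedComponentIn_eq hz] at hb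
      exact hunb hb
  have hA₁P : A₁ ⊆ Set.range f := hAU ▸ Set.subset_union_left
  have l₂ : ChordAux.HasLog (A₂ ∪ α) w e₁ :=
    ChordAux.hasLog_of_preconnected hJ₂ (convex_ball u r₂).isPreconnected hb₂ hwu he₁u
  have l₁ : ChordAux.HasLog (A₁ ∪ α) w e₁ := by
    have a1 : ChordAux.HasLog (A₁ ∪ α) w w' :=
      ChordAux.hasLog_of_preconnected hJ₁ hβpre (by
        rintro z hz (h | h)
        · exact (hβint hz).1 (hA₁P h)
        · exact hdisj z h hz.1) hwβ hwβ'
    have a2 : ChordAux.HasLog (A₁ ∪ α) w' e₂ :=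
      ChordAux.hasLog_of_preconnected hJ₁ (convex_ball v r₁).isPreconnected hb₁ hwv he₂v
    have a3 : ChordAux.HasLog (A₁ ∪ α) e₂ e₁ :=
      ChordAux.hasLog_of_preconnected hJ₁ isPreconnected_connectedComponentIn (by
        rintro z hz (h | h)
        · exact hEP z hz (hA₁P h)
        · exact hEα z hz h) he₂ he₁
    exact (a1.trans a2).trans a3
  have l : ChordAux.HasLog ((A₁ ∪ α) ∪ (A₂ ∪ α)) w e₁ :=
    ChordAux.hasLog_union hJ₁ hJ₂ (by rw [hJI]; exact hαp)
      (fun h => h.elim (fun h => hEP _ he₁ (hA₁P h)) (hEα _ he₁)) l₁ l₂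
  refine ChordAux.not_hasLog hcl hw.1 hw.2 ?_ (l.mono ?_)
  · intro h
    have h1 := connectedComponentIn_eq h
    have h2 := connectedComponentIn_eq he₁
    apply hunb
    rw [h2, ← h1]
    exact hw.2
  · rw [← hAU]
    exact Set.union_subset_union Set.subset_union_left Set.subset_union_left
end
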